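/- Assume N ≥ 1, σ > 0, and either (a) Nσ < 4 and m > 0 with E_min(m) < -m, or (b) Nσ = 4, 0 < m < k* = (σ+1)^{1/σ}B(N,σ)^{-1/σ}, and E_min(m) < -m. Then for any sequence (u_n) ⊂ H²(ℝ^N) satisfying ‖u_n‖_{L²}² → m and E(u_n) → E_min(m), there exist a subsequence (still denoted u_n), a sequence of points (x_n) ⊂ ℝ^N, and a function u ∈ H²(ℝ^N) such that u_n(·+x_n) → u strongly in H²(ℝ^N). In particular, there exists u ∈ H²(ℝ^N) with ‖u‖_{L²}² = m and E(u) = E_min(m). -/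

import Mathlib

open MeasureTheory Filter Topology

noncomputable section

abbrev Esp (N : ℕ) := EuclideanSpace ℝ (Fin N)

/-- Smooth compactly supported test functions. -/
def TestFun {N : ℕ} (φ : Esp N → ℂ) : Prop :=
  ContDiff ℝ (⊤ : ℕ∞) φ ∧ HasCompactSupport φ

/-- Partial derivative in the `i`-th coordinate direction. -/
def pderivC {N : ℕ} (i : Fin N) (φ : Esp N → ℂ) : Esp N → ℂ :=
  fun x => fderiv ℝ φ x (EuclideanSpace.single i (1 : ℝ))

/-- The Laplacian of a (smooth) function. -/
def lapC {N : ℕ} (φ : Esp N → ℂ) : Esp N → ℂ :=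
  fun x => ∑ i, pderivC i (pderivC i φ) x

/-- `v` is the weak `i`-th partial derivative of `u`. -/
def IsWeakPDeriv {N : ℕ} (u : Esp N → ℂ) (i : Fin N) (v : Esp N → ℂ) : Prop :=
  ∀ φ : Esp N → ℂ, TestFun φ → ∫ x, u x * pderivC i φ x = - ∫ x, v x * φ x

/-- `v` is the weak Laplacian of `u`. -/
def IsWeakLap {N : ℕ} (u v : Esp N → ℂ) : Prop :=
  ∀ φ : Esp N → ℂ, TestFun φ → ∫ x, u x * lapC φ x = ∫ x, v x * φ x

/-- An element of the Sobolev space `H²(ℝ^N, ℂ)`: an `L²` function together with its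
weak partial derivatives and its weak Laplacian, all in `L²`. -/
structure H2 (N : ℕ) where
  u : Esp N → ℂ
  grad : Fin N → Esp N → ℂ
  lapl : Esp N → ℂ
  u_mem : MemLp u 2 (volume : Measure (Esp N))
  grad_mem : ∀ i, MemLp (grad i) 2 (volume : Measure (Esp N))
  lapl_mem : MemLp lapl 2 (volume : Measure (Esp N))
  grad_spec : ∀ i, IsWeakPDeriv u i (grad i)
  lapl_spec : IsWeakLap u lapl

namespace H2

variable {N : ℕ}

/-- `∫ |u|²`. -/
def massSq (U : H2 N) : ℝ := ∫ x, ‖U.u x‖ ^ 2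

/-- `∫ |∇u|²`. -/
def gradSq (U : H2 N) : ℝ := ∑ i, ∫ x, ‖U.grad i x‖ ^ 2

/-- `∫ |Δu|²`. -/
def lapSq (U : H2 N) : ℝ := ∫ x, ‖U.lapl x‖ ^ 2

/-- `∫ |u|^{2σ+2}`. -/
def pPow (σ : ℝ) (U : H2 N) : ℝ := ∫ x, ‖U.u x‖ ^ (2 * σ + 2)

/-- The energy `E(u) = ∫|Δu|² - 2∫|∇u|² - (1/(σ+1))∫|u|^{2σ+2}`. -/
def energy (σ : ℝ) (U : H2 N) : ℝ :=
  U.lapSq - 2 * U.gradSq - (1 / (σ + 1)) * U.pPow σ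

/-- The square of the `H²` norm. -/
def h2NormSq (U : H2 N) : ℝ := U.massSq + U.gradSq + U.lapSq

/-- `u` does not vanish almost everywhere. -/
def Nontriv (U : H2 N) : Prop := ¬ (U.u =ᵐ[(volume : Measure (Esp N))] 0)

end H2

/-- `E_min(m) = inf {E(u) : u ∈ H², ∫|u|² = m}`, with values in `EReal`. -/
def EminE (N : ℕ) (σ m : ℝ) : EReal :=
  ⨅ (U : H2 N) (_ : U.massSq = m), ((U.energy σ : ℝ) : EReal)

/-- The `L^p` norm (as a real number) of a function on `ℝ^N`. -/
def rLp {N : ℕ} (p : ℝ) (f : Esp N → ℂ) : ℝ :=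
  (eLpNorm f (ENNReal.ofReal p) (volume : Measure (Esp N))).toReal


/-- The best constant `B(N,σ)` in the Gagliardo–Nirenberg–Sobolev inequality
`‖u‖_{L^{2σ+2}}^{2σ+2} ≤ B ‖Δu‖_{L²}^{Nσ/2} ‖u‖_{L²}^{2+2σ-Nσ/2}`. -/
def GNconst (N : ℕ) (σ : ℝ) : ℝ :=
  sSup {r : ℝ | ∃ U : H2 N, U.Nontriv ∧
    r = U.pPow σ /
      (rLp 2 U.lapl ^ ((N : ℝ) * σ / 2) * rLp 2 U.u ^ (2 + 2 * σ - (N : ℝ) * σ / 2))}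

/-- `k* = (σ+1)^{1/σ} B(N,σ)^{-1/σ}`. -/
def kstar (N : ℕ) (σ : ℝ) : ℝ := (σ + 1) ^ (1 / σ) * GNconst N σ ^ (-(1 / σ))

/-- Strong `H²` convergence of `v k (· + xs k)` to `U`. -/
def H2TendstoTrans {N : ℕ} (v : ℕ → H2 N) (xs : ℕ → Esp N) (U : H2 N) : Prop :=
  Tendsto (fun k => eLpNorm (fun x => (v k).u (x + xs k) - U.u x) 2
      (volume : Measure (Esp N))) atTop (nhds 0) ∧
  (∀ i, Tendsto (fun k => eLpNorm (fun x => (v k).grad i (x + xs k) - U.grad i x) 2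
      (volume : Measure (Esp N))) atTop (nhds 0)) ∧
  Tendsto (fun k => eLpNorm (fun x => (v k).lapl (x + xs k) - U.lapl x) 2
      (volume : Measure (Esp N))) atTop (nhds 0)

/-- `u` is a weak (`H^{-2}`) solution of `Δ²u + 2Δu + (1+c)u - |u|^{2σ}u = 0`. -/
def SolvesSW {N : ℕ} (σ c : ℝ) (U : H2 N) : Prop :=
  ∀ φ : Esp N → ℂ, TestFun φ →
    (∫ x, U.lapl x * lapC φ x) + 2 * (∫ x, U.lapl x * φ x) +
        ((1 + c : ℝ) : ℂ) * (∫ x, U.u x * φ x) -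
        (∫ x, ((‖U.u x‖ ^ (2 * σ) : ℝ) : ℂ) * U.u x * φ x) = 0

/-- `T_c(u) = ∫|Δu|² - 2∫|∇u|² + (1+c)∫|u|²`. -/
def Tfun {N : ℕ} (c : ℝ) (U : H2 N) : ℝ := U.lapSq - 2 * U.gradSq + (1 + c) * U.massSq

/-- `t(c) = inf {T_c(u) : ∫|u|^{2σ+2} = 1}`. -/
def tmin (N : ℕ) (σ c : ℝ) : ℝ := sInf {r : ℝ | ∃ U : H2 N, U.pPow σ = 1 ∧ r = Tfun c U}

/-- The action `S_c(u) = E(u) + (1+c)‖u‖_{L²}² = T_c(u) - (1/(σ+1))∫|u|^{2σ+2}`. -/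
def action {N : ℕ} (σ c : ℝ) (U : H2 N) : ℝ := U.energy σ + (1 + c) * U.massSq

section Part1
open FourierTransform SchwartzMap LineDeriv
open scoped SchwartzMap
variable {N : ℕ}

abbrev L2c (N : ℕ) := Lp (α := Esp N) ℂ 2 volume

lemma pairing_fourier (f : L2c N) (φ : 𝓢(Esp N, ℂ)) :
    ∫ x, φ x * (𝓕 f : L2c N) x = ∫ x, (𝓕 φ) x * f x := by
  have h := congrArg (fun T : 𝓢'(Esp N, ℂ) => T φ) (Lp.fourier_toTemperedDistribution_eq f)
  simp only [TemperedDistribution.fourier_apply, Lp.toTemperedDistribution_apply, smul_eq_mul] at h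
  exact h.symm

lemma integrable_mul_L2 {f g : Esp N → ℂ} (hf : MemLp f 2 volume) (hg : MemLp g 2 volume) :
    Integrable (fun x => f x * g x) volume := by
  exact MemLp.integrable_mul hf hg

/-- the cut-off bump -/
def cutB (N : ℕ) : ContDiffBump (0 : Esp N) := ⟨1, 2, one_pos, one_lt_two⟩

def cutF (n : ℕ) (x : Esp N) : ℂ := ((cutB N ((1 / ((n : ℝ) + 1)) • x) : ℝ) : ℂ)

lemma cutF_contDiff (n : ℕ) : ContDiff ℝ (⊤ : ℕ∞) (cutF (N := N) n) := by
  unfold cutF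
  have h1 : ContDiff ℝ (⊤ : ℕ∞) (cutB N) := (cutB N).contDiff
  exact (Complex.ofRealCLM.contDiff).comp (h1.comp (contDiff_const_smul _))

lemma cutF_compact (n : ℕ) : HasCompactSupport (cutF (N := N) n) := by
  have h1 : HasCompactSupport (cutB N) := (cutB N).hasCompactSupport
  have h2 : HasCompactSupport (fun x : Esp N => cutB N ((1 / ((n : ℝ) + 1)) • x)) :=
    h1.comp_smul (by positivity)
  exact h2.comp_left (g := fun r : ℝ => (r : ℂ)) (by simp)

lemma cutF_norm_le (n : ℕ) (x : Esp N) : ‖cutF n x‖ ≤ 1 := by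
  unfold cutF
  rw [Complex.norm_real, Real.norm_of_nonneg (cutB N).nonneg]
  exact (cutB N).le_one

lemma cutF_deriv_bound (N : ℕ) : ∃ C : ℝ, ∀ (n : ℕ) (i : Fin N) (x : Esp N),
    ‖pderivC i (cutF n) x‖ ≤ C / ((n : ℝ) + 1) := by
  have h1 : ContDiff ℝ (⊤ : ℕ∞) (cutB N) := (cutB N).contDiff
  have hc : Continuous (fderiv ℝ (cutB N)) := h1.continuous_fderiv (by simp)
  have hs : HasCompactSupport (fderiv ℝ (cutB N)) := (cutB N).hasCompactSupport.fderiv ℝ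
  obtain ⟨C, hC⟩ := hs.exists_bound_of_continuous hc
  refine ⟨C, fun n i x => ?_⟩
  have hd : HasFDerivAt (cutF (N := N) n)
      (Complex.ofRealCLM.comp ((fderiv ℝ (cutB N) ((1 / ((n : ℝ) + 1)) • x)).comp
        ((1 / ((n : ℝ) + 1)) • ContinuousLinearMap.id ℝ (Esp N)))) x := by
    have a1 : HasFDerivAt (fun x : Esp N => (1 / ((n : ℝ) + 1)) • x)
        ((1 / ((n : ℝ) + 1)) • ContinuousLinearMap.id ℝ (Esp N)) x :=
      ((1 / ((n : ℝ) + 1)) • ContinuousLinearMap.id ℝ (Esp N)).hasFDerivAt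
    have a2 := (h1.differentiable (by simp) ((1 / ((n : ℝ) + 1)) • x)).hasFDerivAt
    exact Complex.ofRealCLM.hasFDerivAt.comp x (a2.comp x a1)
  unfold pderivC
  rw [hd.fderiv]
  simp only [ContinuousLinearMap.comp_apply, _root_.smul_apply,
    ContinuousLinearMap.id_apply, map_smul, Complex.ofRealCLM_apply, norm_smul]
  rw [Complex.norm_real, Real.norm_of_nonneg (by positivity)]
  have := ((fderiv ℝ (cutB N) ((1 / ((n : ℝ) + 1)) • x))).le_opNorm (EuclideanSpace.single i (1:ℝ))
  have h3 := hC ((1 / ((n : ℝ) + 1)) • x)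
  simp only [PiLp.norm_single, norm_one, mul_one] at this
  rw [div_mul_eq_mul_div, one_mul]
  gcongr
  exact this.trans h3

lemma cutF_tendsto (x : Esp N) : Tendsto (fun n => cutF n x) atTop (nhds 1) := by
  have h : ∀ᶠ n : ℕ in atTop, cutF n x = 1 := by
    filter_upwards [eventually_ge_atTop (Nat.ceil ‖x‖)] with n hn
    have h0 : ‖x‖ ≤ n := (Nat.le_ceil _).trans (by exact_mod_cast hn)
    unfold cutF
    rw [(cutB N).one_of_mem_closedBall]
    · simp
    · rw [mem_closedBall_zero_iff, norm_smul, Real.norm_of_nonneg (by positivity)]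
      change _ ≤ (1:ℝ)
      rw [one_div, inv_mul_le_iff₀ (by positivity)]
      linarith
  exact tendsto_const_nhds.congr' (h.mono fun n hn => hn.symm)

lemma schwartz_pderiv (φ : 𝓢(Esp N, ℂ)) (i : Fin N) (x : Esp N) :
    (∂_{EuclideanSpace.single i (1:ℝ)} φ : 𝓢(Esp N, ℂ)) x = pderivC i φ x := by
  rw [lineDerivOp_apply_eq_fderiv]; rfl

lemma pderivC_mul {f g : Esp N → ℂ} (hf : Differentiable ℝ f) (hg : Differentiable ℝ g)
    (i : Fin N) (x : Esp N) :
    pderivC i (fun x => f x * g x) x = f x * pderivC i g x + pderivC i f x * g x := by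
  unfold pderivC
  rw [fderiv_fun_mul (hf x) (hg x)]
  simp [mul_comm]

/-- a weak divergence identity extends from test functions to Schwartz functions -/
lemma weak_extend {v : Fin N → Esp N → ℂ} {w : Esp N → ℂ} (hv : ∀ i, MemLp (v i) 2 volume)
    (hw : MemLp w 2 volume)
    (h : ∀ φ : Esp N → ℂ, TestFun φ → ∑ i, ∫ x, v i x * pderivC i φ x = - ∫ x, w x * φ x)
    (φ : 𝓢(Esp N, ℂ)) :
    ∑ i, ∫ x, v i x * pderivC i φ x = - ∫ x, w x * φ x := by
  obtain ⟨C, hC⟩ := cutF_deriv_bound N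
  have hφd : Differentiable ℝ φ := φ.differentiable
  have hcd : ∀ n, Differentiable ℝ (cutF (N := N) n) := fun n =>
    (cutF_contDiff n).differentiable (by simp)
  have htest : ∀ n, TestFun (fun x => cutF n x * φ x) := fun n =>
    ⟨(cutF_contDiff n).mul (φ.smooth ⊤), (cutF_compact n).mul_right⟩
  have hφL : MemLp φ 2 (volume : Measure (Esp N)) := φ.memLp 2 volume
  have hdL : ∀ i, MemLp (fun x => pderivC i φ x) 2 (volume : Measure (Esp N)) := fun i => by
    have := (∂_{EuclideanSpace.single i (1:ℝ)} φ : 𝓢(Esp N, ℂ)).memLp 2 volume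
    refine this.congr_norm ?_ ?_
    · have h2 := this.1
      refine h2.congr (Eventually.of_forall fun x => ?_)
      exact schwartz_pderiv φ i x
    · exact Eventually.of_forall fun x => by rw [schwartz_pderiv]
  have T1 : Tendsto (fun n => ∫ x, w x * (cutF n x * φ x)) atTop (nhds (∫ x, w x * φ x)) := by
    refine tendsto_integral_of_dominated_convergence (fun x => ‖w x * φ x‖) ?_
      (integrable_mul_L2 hw hφL).norm ?_ ?_
    · intro n
      exact hw.1.mul ((cutF_contDiff n).continuous.aestronglyMeasurable.mul hφL.1)
    · intro n
      refine Eventually.of_forall fun x => ?_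
      rw [norm_mul, norm_mul, norm_mul]
      have := cutF_norm_le n x
      have h2 := norm_nonneg (φ x)
      gcongr
      nlinarith
    · refine Eventually.of_forall fun x => ?_
      have := ((cutF_tendsto x).mul_const (φ x)).const_mul (w x)
      simpa using this
  have T2 : ∀ i, Tendsto (fun n => ∫ x, v i x * pderivC i (fun x => cutF n x * φ x) x) atTop
      (nhds (∫ x, v i x * pderivC i φ x)) := by
    intro i
    have C0 : 0 ≤ C := by
      have := hC 0 i 0
      simp only [Nat.cast_zero, zero_add, div_one] at this
      exact (norm_nonneg _).trans this
    refine tendsto_integral_of_dominated_convergence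
      (fun x => ‖v i x * pderivC i φ x‖ + C * ‖v i x * φ x‖) ?_
      ((integrable_mul_L2 (hv i) (hdL i)).norm.add
        ((integrable_mul_L2 (hv i) hφL).norm.const_mul C)) ?_ ?_
    · intro n
      refine (hv i).1.mul ?_
      have : Continuous (fun x => pderivC i (fun x => cutF n x * φ x) x) := by
        have := (htest n).1.continuous_fderiv (by simp)
        exact this.clm_apply continuous_const
      exact this.aestronglyMeasurable
    · intro n
      refine Eventually.of_forall fun x => ?_
      rw [pderivC_mul (hcd n) hφd, norm_mul, norm_mul, norm_mul]
      have h1 := cutF_norm_le n x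
      have h2 : ‖pderivC i (cutF n) x‖ ≤ C := (hC n i x).trans
        (div_le_self C0 (by have : (0:ℝ) ≤ n := n.cast_nonneg; linarith))
      have h3 := norm_add_le (cutF n x * pderivC i φ x) (pderivC i (cutF n) x * φ x)
      rw [norm_mul, norm_mul] at h3
      have h4 : ‖cutF n x‖ * ‖pderivC i φ x‖ ≤ 1 * ‖pderivC i φ x‖ := by gcongr
      have h5 : ‖pderivC i (cutF n) x‖ * ‖φ x‖ ≤ C * ‖φ x‖ := by gcongr
      calc _ ≤ ‖v i x‖ * (‖pderivC i φ x‖ + C * ‖φ x‖) := by gcongr; linarith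
        _ = _ := by ring
    · refine Eventually.of_forall fun x => ?_
      have t1 : Tendsto (fun n => pderivC i (cutF n) x) atTop (nhds 0) := by
        refine squeeze_zero_norm (fun n => hC n i x) ?_
        have := tendsto_one_div_add_atTop_nhds_zero_nat (𝕜 := ℝ)
        simpa [div_eq_mul_inv] using this.const_mul C
      have := (((cutF_tendsto x).mul_const (pderivC i φ x)).add
        (t1.mul_const (φ x))).const_mul (v i x)
      simp only [one_mul, zero_mul, add_zero] at this
      refine this.congr fun n => ?_
      rw [pderivC_mul (hcd n) hφd]
  have T3 := tendsto_finsetSum Finset.univ (fun i _ => T2 i)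
  refine tendsto_nhds_unique T3 ?_
  refine T1.neg.congr fun n => ?_
  exact (h _ (htest n)).symm

lemma fourier_div {v : Fin N → Esp N → ℂ} {w : Esp N → ℂ} (hv : ∀ i, MemLp (v i) 2 volume)
    (hw : MemLp w 2 volume)
    (h : ∀ φ : Esp N → ℂ, TestFun φ → ∑ i, ∫ x, v i x * pderivC i φ x = - ∫ x, w x * φ x) :
    ∀ᵐ ξ : Esp N, (𝓕 (hw.toLp w) : L2c N) ξ =
      ∑ i, (2 * Real.pi * Complex.I) * (ξ i) * (𝓕 ((hv i).toLp (v i)) : L2c N) ξ := by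
  have hloc : ∀ i, LocallyIntegrable (fun ξ : Esp N => (2 * Real.pi * Complex.I) * (ξ i) *
      (𝓕 ((hv i).toLp (v i)) : L2c N) ξ) volume := by
    intro i
    have h1 : LocallyIntegrable (𝓕 ((hv i).toLp (v i)) : L2c N) volume :=
      (Lp.memLp _).locallyIntegrable one_le_two
    have h2 : Continuous (fun ξ : Esp N => (2 * Real.pi * Complex.I) * ((ξ i : ℝ) : ℂ)) := by
      fun_prop
    rw [← locallyIntegrableOn_univ] at h1 ⊢
    exact h1.continuousOn_mul h2.continuousOn isOpen_univ.isLocallyClosed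
  refine ae_eq_of_integral_contDiff_smul_eq ((Lp.memLp _).locallyIntegrable one_le_two) ?_ ?_
  · exact locallyIntegrable_finsetSum _ (fun i _ => hloc i)
  intro g hg hgc
  have hgC : ContDiff ℝ (⊤ : ℕ∞) (fun x => ((g x : ℝ) : ℂ)) := Complex.ofRealCLM.contDiff.comp hg
  have hgcC : HasCompactSupport (fun x => ((g x : ℝ) : ℂ)) :=
    hgc.comp_left (g := fun r : ℝ => (r : ℂ)) (by simp)
  let φ : 𝓢(Esp N, ℂ) := hgcC.toSchwartzMap hgC
  have hφ : ∀ x, φ x = (g x : ℂ) := fun x => rfl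
  have e1 : ∫ x, g x • (𝓕 (hw.toLp w) : L2c N) x = ∫ x, (𝓕 φ) x * w x := by
    have := pairing_fourier (hw.toLp w) φ
    simp only [hφ] at this
    simp only [Complex.real_smul]
    rw [this]
    refine integral_congr_ae ?_
    filter_upwards [hw.coeFn_toLp] with x hx
    rw [hx]
  have e2 := weak_extend hv hw h (𝓕 φ)
  have e3 : ∀ i, ∫ x, v i x * pderivC i (𝓕 φ : 𝓢(Esp N, ℂ)) x =
      - ∫ ξ, g ξ • ((2 * Real.pi * Complex.I) * (ξ i) *
      (𝓕 ((hv i).toLp (v i)) : L2c N) ξ) := by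
    intro i
    have htg : (fun x : Esp N => inner ℝ x (EuclideanSpace.single i (1:ℝ))).HasTemperateGrowth := by
      fun_prop
    have a := lineDerivOp_fourier_eq φ (EuclideanSpace.single i (1:ℝ))
    have b := pairing_fourier ((hv i).toLp (v i))
      (-(2 * Real.pi * Complex.I) • (smulLeftCLM ℂ fun x => inner ℝ x (EuclideanSpace.single i (1:ℝ))) φ)
    rw [← a] at b
    rw [← integral_neg]
    calc _ = ∫ x, (∂_{EuclideanSpace.single i (1:ℝ)} (𝓕 φ) : 𝓢(Esp N, ℂ)) x * ((hv i).toLp (v i)) x := by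
          refine integral_congr_ae ?_
          filter_upwards [(hv i).coeFn_toLp] with x hx
          rw [hx, schwartz_pderiv, mul_comm]
      _ = _ := by
          rw [← b]
          refine integral_congr_ae (Eventually.of_forall fun x => ?_)
          have k := smulLeftCLM_apply_apply htg φ x
          simp only [_root_.smul_apply, smul_eq_mul]
          rw [k, hφ]
          simp only [Complex.real_smul, EuclideanSpace.inner_single_right]
          simp
          ring
  rw [e1]
  have e4 : ∫ x, (𝓕 φ) x * w x = ∫ x, w x * (𝓕 φ) x := by simp only [mul_comm]
  rw [e4, ← neg_eq_iff_eq_neg.mpr e2]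
  simp only [e3, Finset.sum_neg_distrib, neg_neg]
  simp only [Finset.smul_sum]
  rw [integral_finsetSum]
  intro i _
  exact (hloc i).integrable_smul_left_of_hasCompactSupport hg.continuous hgc

end Part1

section Part2
open FourierTransform SchwartzMap LineDeriv
open scoped SchwartzMap
variable {N : ℕ}

lemma TestFun.pderiv {φ : Esp N → ℂ} (h : TestFun φ) (i : Fin N) : TestFun (pderivC i φ) := by
  constructor
  · have := h.1.fderiv_right (m := (⊤ : ℕ∞)) (by simp)
    exact this.clm_apply contDiff_const
  · exact (h.2.fderiv (𝕜 := ℝ)).comp_left (g := fun L : Esp N →L[ℝ] ℂ => L (EuclideanSpace.single i 1)) (by simp)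

lemma TestFun.memLp {φ : Esp N → ℂ} (h : TestFun φ) : MemLp φ 2 (volume : Measure (Esp N)) :=
  h.1.continuous.memLp_of_hasCompactSupport h.2

def H2.uL (U : H2 N) : L2c N := U.u_mem.toLp U.u
def H2.uh (U : H2 N) : L2c N := 𝓕 U.uL

lemma H2.grad_hat (U : H2 N) (i : Fin N) :
    ∀ᵐ ξ : Esp N, (𝓕 ((U.grad_mem i).toLp (U.grad i)) : L2c N) ξ =
      (2 * Real.pi * Complex.I) * (ξ i) * U.uh ξ := by
  classical
  have hv : ∀ j, MemLp ((fun j => if j = i then U.u else 0) j) 2 (volume : Measure (Esp N)) := by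
    intro j
    by_cases hj : j = i
    · simpa [hj] using U.u_mem
    · simp [hj]
  have := fourier_div hv (U.grad_mem i) (by
    intro φ hφ
    rw [Finset.sum_eq_single i]
    · simpa using U.grad_spec i φ hφ
    · intro j _ hj
      simp [hj]
    · simp)
  filter_upwards [this, Lp.coeFn_zero (E := ℂ) (p := 2) (μ := (volume : Measure (Esp N)))] with ξ hξ h0
  rw [hξ, Finset.sum_eq_single i]
  · simp [H2.uh, H2.uL]
  · intro j _ hj
    have : (hv j).toLp _ = 0 := by
      simp [hj]
    rw [this, FourierTransform.fourier_zero, h0]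
    simp
  · simp

lemma H2.lapl_hat (U : H2 N) :
    ∀ᵐ ξ : Esp N, (𝓕 (U.lapl_mem.toLp U.lapl) : L2c N) ξ =
      - (4 * Real.pi ^ 2 * ‖ξ‖ ^ 2 : ℝ) * U.uh ξ := by
  have := fourier_div U.grad_mem U.lapl_mem (by
    intro φ hφ
    rw [← U.lapl_spec φ hφ]
    unfold lapC
    simp only [Finset.mul_sum]
    rw [integral_finsetSum, ← Finset.sum_neg_distrib]
    · refine Finset.sum_congr rfl fun i _ => ?_
      rw [U.grad_spec i _ (hφ.pderiv i), neg_neg]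
    · intro i _
      exact integrable_mul_L2 U.u_mem ((hφ.pderiv i).pderiv i).memLp)
  have h2 : ∀ᵐ ξ : Esp N, ∀ i, (𝓕 ((U.grad_mem i).toLp (U.grad i)) : L2c N) ξ =
      (2 * Real.pi * Complex.I) * (ξ i) * U.uh ξ := ae_all_iff.mpr fun i => U.grad_hat i
  filter_upwards [this, h2] with ξ h1 h2
  rw [h1]
  simp only [h2, EuclideanSpace.norm_sq_eq]
  push_cast
  rw [Finset.mul_sum, ← Finset.sum_neg_distrib, Finset.sum_mul]
  refine Finset.sum_congr rfl fun i _ => ?_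
  have : Complex.I ^ 2 = -1 := Complex.I_sq
  have h3 : (((‖ξ i‖ : ℝ) : ℂ)) ^ 2 = ((ξ i : ℝ) : ℂ) ^ 2 := by
    rw [← Complex.ofReal_pow, Real.norm_eq_abs, sq_abs, Complex.ofReal_pow]
  rw [h3]
  linear_combination (4 * (Real.pi : ℂ) ^ 2 * (ξ i : ℂ) ^ 2 * U.uh ξ) * this

lemma L2_sq (f : L2c N) : ∫ x, ‖f x‖ ^ 2 = ‖f‖ ^ 2 := by
  rw [@norm_sq_eq_re_inner ℂ, L2.inner_def]
  rw [← integral_re (L2.integrable_inner f f)]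
  refine integral_congr_ae (Eventually.of_forall fun x => ?_)
  simp only [inner_self_eq_norm_sq]

lemma L2_sq_int (f : L2c N) : Integrable (fun x => ‖f x‖ ^ 2) volume :=
  (memLp_two_iff_integrable_sq_norm (Lp.memLp f).1).1 (Lp.memLp f)

lemma toLp_sq {f : Esp N → ℂ} (hf : MemLp f 2 volume) : ∫ x, ‖f x‖ ^ 2 = ‖hf.toLp f‖ ^ 2 := by
  rw [← L2_sq]
  refine integral_congr_ae ?_
  filter_upwards [hf.coeFn_toLp] with x hx
  rw [hx]

lemma plancherel_sq {f : Esp N → ℂ} (hf : MemLp f 2 volume) :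
    ∫ x, ‖f x‖ ^ 2 = ∫ ξ, ‖(𝓕 (hf.toLp f) : L2c N) ξ‖ ^ 2 := by
  rw [toLp_sq hf, L2_sq, Lp.norm_fourier_eq]

lemma H2.massSq_norm (U : H2 N) : U.massSq = ‖U.uL‖ ^ 2 := toLp_sq U.u_mem
lemma H2.massSq_eq (U : H2 N) : U.massSq = ∫ ξ, ‖U.uh ξ‖ ^ 2 := plancherel_sq U.u_mem
lemma H2.norm_uh (U : H2 N) : ‖U.uh‖ = ‖U.uL‖ := Lp.norm_fourier_eq _

lemma H2.lap_aux (U : H2 N) : (fun ξ => ‖(𝓕 (U.lapl_mem.toLp U.lapl) : L2c N) ξ‖ ^ 2) =ᵐ[volume]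
    fun ξ : Esp N => (4 * Real.pi ^ 2 * ‖ξ‖ ^ 2) ^ 2 * ‖U.uh ξ‖ ^ 2 := by
  filter_upwards [U.lapl_hat] with ξ h
  rw [h, norm_mul, norm_neg, Complex.norm_real, mul_pow, Real.norm_eq_abs, sq_abs]

lemma H2.lap_int (U : H2 N) :
    Integrable (fun ξ : Esp N => (4 * Real.pi ^ 2 * ‖ξ‖ ^ 2) ^ 2 * ‖U.uh ξ‖ ^ 2) volume :=
  (L2_sq_int _).congr U.lap_aux

lemma H2.lapSq_eq (U : H2 N) :
    U.lapSq = ∫ ξ : Esp N, (4 * Real.pi ^ 2 * ‖ξ‖ ^ 2) ^ 2 * ‖U.uh ξ‖ ^ 2 := by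
  unfold H2.lapSq
  rw [plancherel_sq U.lapl_mem]
  exact integral_congr_ae U.lap_aux

lemma H2.grad_aux (U : H2 N) (i : Fin N) :
    (fun ξ => ‖(𝓕 ((U.grad_mem i).toLp (U.grad i)) : L2c N) ξ‖ ^ 2) =ᵐ[volume]
    fun ξ : Esp N => (4 * Real.pi ^ 2 * ‖ξ i‖ ^ 2) * ‖U.uh ξ‖ ^ 2 := by
  filter_upwards [U.grad_hat i] with ξ h
  rw [h]
  simp only [norm_mul, Complex.norm_real, Complex.norm_I, Real.norm_of_nonneg Real.pi_pos.le]
  simp only [RCLike.norm_ofNat, mul_one]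
  ring

lemma H2.gradSq_eq (U : H2 N) :
    U.gradSq = ∫ ξ : Esp N, (4 * Real.pi ^ 2 * ‖ξ‖ ^ 2) * ‖U.uh ξ‖ ^ 2 := by
  unfold H2.gradSq
  rw [Finset.sum_congr rfl fun i _ => (plancherel_sq (U.grad_mem i)).trans
    (integral_congr_ae (U.grad_aux i)), ← integral_finsetSum]
  · refine integral_congr_ae (Eventually.of_forall fun x => ?_)
    simp only [EuclideanSpace.norm_sq_eq, Finset.mul_sum, Finset.sum_mul]
  · intro i _
    exact (L2_sq_int _).congr (U.grad_aux i)

lemma H2.grad_int (U : H2 N) :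
    Integrable (fun ξ : Esp N => (4 * Real.pi ^ 2 * ‖ξ‖ ^ 2) * ‖U.uh ξ‖ ^ 2) volume := by
  have : Integrable (fun ξ : Esp N => ∑ i, (4 * Real.pi ^ 2 * ‖ξ i‖ ^ 2) * ‖U.uh ξ‖ ^ 2) volume :=
    integrable_finsetSum _ fun i _ => (L2_sq_int _).congr (U.grad_aux i)
  refine this.congr (Eventually.of_forall fun x => ?_)
  simp only [EuclideanSpace.norm_sq_eq, Finset.mul_sum, Finset.sum_mul]

lemma H2.massSq_nonneg (U : H2 N) : 0 ≤ U.massSq := integral_nonneg fun _ => by positivity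
lemma H2.lapSq_nonneg (U : H2 N) : 0 ≤ U.lapSq := integral_nonneg fun _ => by positivity
lemma H2.gradSq_nonneg (U : H2 N) : 0 ≤ U.gradSq :=
  Finset.sum_nonneg fun _ _ => integral_nonneg fun _ => by positivity

lemma H2.gradSq_le (U : H2 N) {a : ℝ} (ha : 0 < a) :
    2 * U.gradSq ≤ a * U.lapSq + a⁻¹ * U.massSq := by
  rw [U.gradSq_eq, U.lapSq_eq, U.massSq_eq, ← integral_const_mul, ← integral_const_mul,
    ← integral_const_mul, ← integral_add (U.lap_int.const_mul a) ((L2_sq_int _).const_mul _)]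
  refine integral_mono (U.grad_int.const_mul 2)
    ((U.lap_int.const_mul a).add ((L2_sq_int _).const_mul _)) fun ξ => ?_
  simp only
  set s := 4 * Real.pi ^ 2 * ‖ξ‖ ^ 2
  have h1 : 2 * s ≤ a * s ^ 2 + a⁻¹ := by
    have := mul_inv_cancel₀ ha.ne'
    have h2 : a * s ^ 2 + a⁻¹ - 2 * s = a⁻¹ * (a * s - 1) ^ 2 := by
      field_simp
      ring
    have h3 : 0 ≤ a⁻¹ * (a * s - 1) ^ 2 := by positivity
    linarith
  have h2 : 0 ≤ ‖U.uh ξ‖ ^ 2 := by positivity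
  nlinarith

end Part2

section Part3
open FourierTransform SchwartzMap LineDeriv
open scoped SchwartzMap
variable {N : ℕ}

lemma fubini_fourierInv {φ g : Esp N → ℂ} (hφ : Integrable φ volume) (hg : Integrable g volume) :
    ∫ x, 𝓕⁻ φ x * g x = ∫ ξ, φ ξ * 𝓕⁻ g ξ := by
  have := VectorFourier.integral_fourierIntegral_smul_eq_flip (μ := (volume : Measure (Esp N)))
    (ν := (volume : Measure (Esp N))) (e := Real.fourierChar)
    (L := -innerₗ (Esp N)) (f := φ) (g := g) Real.continuous_fourierChar
    (by simp only [LinearMap.neg_apply, innerₗ_apply_apply]; fun_prop) hφ hg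
  have hflip : (-innerₗ (Esp N)).flip = -innerₗ (Esp N) := by
    ext x y
    simp [real_inner_comm]
  rw [hflip] at this
  exact this

lemma pairing_fourierInv (f : L2c N) (φ : 𝓢(Esp N, ℂ)) :
    ∫ x, φ x * (𝓕⁻ f : L2c N) x = ∫ x, (𝓕⁻ φ) x * f x := by
  have h := pairing_fourier (𝓕⁻ f) (𝓕⁻ φ)
  rw [FourierTransform.fourier_fourierInv_eq, FourierTransform.fourier_fourierInv_eq] at h
  exact h.symm

lemma L2_ext_schwartz {f g : Esp N → ℂ} (hf : LocallyIntegrable f volume)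
    (hg : LocallyIntegrable g volume)
    (h : ∀ φ : 𝓢(Esp N, ℂ), HasCompactSupport φ → ∫ x, φ x * f x = ∫ x, φ x * g x) :
    f =ᵐ[volume] g := by
  refine ae_eq_of_integral_contDiff_smul_eq hf hg fun g hg hgc => ?_
  have hgC : ContDiff ℝ (⊤ : ℕ∞) (fun x => ((g x : ℝ) : ℂ)) := Complex.ofRealCLM.contDiff.comp hg
  have hgcC : HasCompactSupport (fun x => ((g x : ℝ) : ℂ)) :=
    hgc.comp_left (g := fun r : ℝ => (r : ℂ)) (by simp)
  have := h (hgcC.toSchwartzMap hgC) hgcC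
  simpa [Complex.real_smul] using this

lemma fourierInv_ae {g : Esp N → ℂ} (h1 : Integrable g volume) (h2 : MemLp g 2 volume) :
    (𝓕⁻ (h2.toLp g) : L2c N) =ᵐ[volume] 𝓕⁻ g := by
  have hcont : Continuous (𝓕⁻ g) := by
    have := VectorFourier.fourierIntegral_continuous (μ := (volume : Measure (Esp N)))
      (e := Real.fourierChar) (L := -innerₗ (Esp N)) Real.continuous_fourierChar
      (by simp only [LinearMap.neg_apply, innerₗ_apply_apply]; fun_prop) h1
    exact this
  refine L2_ext_schwartz ((Lp.memLp _).locallyIntegrable one_le_two) hcont.locallyIntegrable ?_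
  intro φ _
  rw [pairing_fourierInv, ← fubini_fourierInv φ.integrable h1]
  refine integral_congr_ae ?_
  filter_upwards [h2.coeFn_toLp] with x hx
  rw [hx, fourierInv_coe]

/-- the conjugate of the kernel of the low frequency part, on the Fourier side -/
def kerF (A : ℝ) (x : Esp N) : Esp N → ℂ :=
  (Metric.ball (0 : Esp N) A).indicator (fun ξ => ((Real.fourierChar (-(inner ℝ ξ x)) : Circle) : ℂ))

lemma kerF_mem (A : ℝ) (x : Esp N) : MemLp (kerF A x) 2 volume := by
  have hc : Continuous (fun ξ : Esp N => ((Real.fourierChar (-(inner ℝ ξ x)) : Circle) : ℂ)) :=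
    continuous_subtype_val.comp (Real.continuous_fourierChar.comp (by fun_prop))
  have : MemLp ((Metric.ball (0 : Esp N) A).indicator (fun _ => (1:ℂ))) 2 volume :=
    memLp_indicator_const 2 measurableSet_ball 1 (Or.inr measure_ball_lt_top.ne)
  refine this.of_le (hc.aestronglyMeasurable.indicator measurableSet_ball) ?_
  refine Eventually.of_forall fun ξ => ?_
  have hn : ‖((Real.fourierChar (-(inner ℝ ξ x)) : Circle) : ℂ)‖ = 1 := Circle.norm_coe _
  unfold kerF
  by_cases h : ξ ∈ Metric.ball (0 : Esp N) A <;> simp [Set.indicator, h, hn]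

def kerL (A : ℝ) (x : Esp N) : L2c N := (kerF_mem A x).toLp _

lemma kerL_norm (A : ℝ) (x : Esp N) :
    ‖kerL A x‖ ^ 2 = (volume (Metric.ball (0 : Esp N) A)).toReal := by
  rw [kerL, ← toLp_sq]
  have : ∀ ξ, ‖kerF A x ξ‖ ^ 2 = (Metric.ball (0 : Esp N) A).indicator (fun _ => (1:ℝ)) ξ := by
    intro ξ
    have hn : ‖((Real.fourierChar (-(inner ℝ ξ x)) : Circle) : ℂ)‖ = 1 := Circle.norm_coe _
    unfold kerF
    by_cases h : ξ ∈ Metric.ball (0 : Esp N) A <;> simp [Set.indicator, h, hn]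
  simp only [this]
  rw [integral_indicator measurableSet_ball]
  simp [Measure.real]

/-- low frequency part -/
def lowF (A : ℝ) (f : L2c N) (x : Esp N) : ℂ := inner ℂ (kerL A x) (𝓕 f : L2c N)

lemma lowF_norm_le (A : ℝ) (f : L2c N) (x : Esp N) :
    ‖lowF A f x‖ ≤ Real.sqrt ((volume (Metric.ball (0 : Esp N) A)).toReal) * ‖f‖ := by
  rw [← kerL_norm A x, Real.sqrt_sq (norm_nonneg _), ← Lp.norm_fourier_eq f]
  exact norm_inner_le_norm _ _

lemma lowI_mem (A : ℝ) (f : L2c N) :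
    MemLp ((Metric.ball (0 : Esp N) A).indicator (𝓕 f : L2c N)) 2 volume :=
  (Lp.memLp _).indicator measurableSet_ball

lemma hiI_mem (A : ℝ) (f : L2c N) :
    MemLp ((Metric.ball (0 : Esp N) A)ᶜ.indicator (𝓕 f : L2c N)) 2 volume :=
  (Lp.memLp _).indicator measurableSet_ball.compl

/-- high frequency part -/
def hiL (A : ℝ) (f : L2c N) : L2c N := 𝓕⁻ ((hiI_mem A f).toLp _)

lemma lowI_int (A : ℝ) (f : L2c N) :
    Integrable ((Metric.ball (0 : Esp N) A).indicator (𝓕 f : L2c N)) volume := by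
  rw [integrable_indicator_iff measurableSet_ball]
  have : IsFiniteMeasure (volume.restrict (Metric.ball (0 : Esp N) A)) :=
    isFiniteMeasure_restrict.2 measure_ball_lt_top.ne
  exact ((Lp.memLp (𝓕 f : L2c N)).restrict _).integrable one_le_two

lemma lowF_eq (A : ℝ) (f : L2c N) (x : Esp N) :
    lowF A f x = 𝓕⁻ ((Metric.ball (0 : Esp N) A).indicator (𝓕 f : L2c N)) x := by
  unfold lowF
  rw [L2.inner_def, Real.fourierInv_eq]
  refine integral_congr_ae ?_
  filter_upwards [(kerF_mem A x).coeFn_toLp] with ξ hξ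
  rw [kerL, hξ]
  unfold kerF
  by_cases h : ξ ∈ Metric.ball (0 : Esp N) A
  · simp only [Set.indicator, h, if_true]
    rw [Circle.smul_def, RCLike.inner_apply, AddChar.map_neg_eq_inv, Circle.coe_inv_eq_conj]
    simp [mul_comm]
  · simp [Set.indicator, h]

lemma low_hi (A : ℝ) (f : L2c N) : ∀ᵐ x, f x = lowF A f x + hiL A f x := by
  have e : (lowI_mem A f).toLp _ + (hiI_mem A f).toLp _ = (𝓕 f : L2c N) := by
    rw [← MemLp.toLp_add]
    apply Lp.ext
    refine (MemLp.coeFn_toLp _).trans (Eventually.of_forall fun ξ => ?_)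
    exact congrFun (Set.indicator_self_add_compl _ _) ξ
  have e2 : f = 𝓕⁻ ((lowI_mem A f).toLp _) + hiL A f := by
    unfold hiL
    rw [← FourierTransform.fourierInv_add, e, FourierTransform.fourierInv_fourier_eq]
  have h1 := fourierInv_ae (lowI_int A f) (lowI_mem A f)
  filter_upwards [h1, Lp.coeFn_add (𝓕⁻ ((lowI_mem A f).toLp _)) (hiL A f)] with x h1 h2
  conv_lhs => rw [e2]
  rw [h2, Pi.add_apply, h1, lowF_eq]

lemma lowF_continuous (A : ℝ) (f : L2c N) : Continuous (lowF A f) := by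
  have := VectorFourier.fourierIntegral_continuous (μ := (volume : Measure (Esp N)))
      (e := Real.fourierChar) (L := -innerₗ (Esp N)) Real.continuous_fourierChar
      (by simp only [LinearMap.neg_apply, innerₗ_apply_apply]; fun_prop) (lowI_int A f)
  have h : lowF A f = 𝓕⁻ ((Metric.ball (0 : Esp N) A).indicator (𝓕 f : L2c N)) :=
    funext (lowF_eq A f)
  rw [h]
  exact this

lemma hiL_fourier (A : ℝ) (f : L2c N) :
    (𝓕 (hiL A f) : L2c N) =ᵐ[volume] (Metric.ball (0 : Esp N) A)ᶜ.indicator (𝓕 f : L2c N) := by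
  unfold hiL
  rw [FourierTransform.fourier_fourierInv_eq]
  exact MemLp.coeFn_toLp _

/-- translation on the Fourier side -/
lemma fourier_translate {f : Esp N → ℂ} (hf : MemLp f 2 volume) (a : Esp N)
    (hf' : MemLp (fun x => f (x + a)) 2 volume) :
    ∀ᵐ ξ, (𝓕 (hf'.toLp _) : L2c N) ξ =
      ((Real.fourierChar (inner ℝ ξ a) : Circle) : ℂ) * (𝓕 (hf.toLp f) : L2c N) ξ := by
  have hc : Continuous (fun ξ : Esp N => ((Real.fourierChar (inner ℝ ξ a) : Circle) : ℂ)) :=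
    continuous_subtype_val.comp (Real.continuous_fourierChar.comp (by fun_prop))
  refine L2_ext_schwartz ((Lp.memLp _).locallyIntegrable one_le_two) ?_ ?_
  · have h1 : LocallyIntegrable (𝓕 (hf.toLp f) : L2c N) volume :=
      (Lp.memLp _).locallyIntegrable one_le_two
    rw [← locallyIntegrableOn_univ] at h1 ⊢
    exact h1.continuousOn_mul hc.continuousOn isOpen_univ.isLocallyClosed
  intro φ hφ
  have hsm : ContDiff ℝ (⊤ : ℕ∞)
      (fun ξ : Esp N => φ ξ * ((Real.fourierChar (inner ℝ ξ a) : Circle) : ℂ)) := by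
    refine (φ.smooth ⊤).mul ?_
    simp only [Real.fourierChar_apply]
    refine Complex.contDiff_exp.comp ?_
    refine ContDiff.mul ?_ contDiff_const
    refine Complex.ofRealCLM.contDiff.comp ?_
    exact contDiff_const.mul (contDiff_id.inner ℝ contDiff_const)
  let φ' : 𝓢(Esp N, ℂ) := (hφ.mul_right (f' := fun ξ : Esp N =>
    ((Real.fourierChar (inner ℝ ξ a) : Circle) : ℂ))).toSchwartzMap hsm
  have hφ' : ∀ ξ, φ' ξ = φ ξ * ((Real.fourierChar (inner ℝ ξ a) : Circle) : ℂ) := fun ξ => rfl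
  have hF : ∀ x, (𝓕 φ') x = (𝓕 φ) (x - a) := by
    intro x
    rw [fourier_coe, fourier_coe, Real.fourier_eq, Real.fourier_eq]
    refine integral_congr_ae (Eventually.of_forall fun ξ => ?_)
    simp only [hφ', Circle.smul_def, smul_eq_mul]
    rw [inner_sub_right, neg_sub, sub_eq_add_neg, AddChar.map_add_eq_mul, Circle.coe_mul]
    ring
  have e1 := pairing_fourier (hf.toLp f) φ'
  have e2 := pairing_fourier (hf'.toLp _) φ
  simp only [← mul_assoc]
  simp only [hφ', hF] at e1
  rw [e1, e2]
  have s1 : ∫ x, (𝓕 φ) x * (hf'.toLp _) x = ∫ x, (𝓕 φ) x * f (x + a) := by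
    refine integral_congr_ae ?_
    filter_upwards [hf'.coeFn_toLp] with x hx
    rw [hx]
  have s2 : ∫ x, (𝓕 φ) (x - a) * (hf.toLp f) x = ∫ x, (𝓕 φ) (x - a) * f x := by
    refine integral_congr_ae ?_
    filter_upwards [hf.coeFn_toLp] with x hx
    rw [hx]
  rw [s1, s2, ← integral_add_right_eq_self (fun x => (𝓕 φ : 𝓢(Esp N, ℂ)) (x - a) * f x) a]
  simp

/-- the low frequency part of a translate at `0` -/
lemma lowF_translate {f : Esp N → ℂ} (hf : MemLp f 2 volume) (a : Esp N)
    (hf' : MemLp (fun x => f (x + a)) 2 volume) (A : ℝ) :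
    lowF A (hf'.toLp _) 0 = lowF A (hf.toLp f) a := by
  rw [lowF_eq, lowF_eq, Real.fourierInv_eq, Real.fourierInv_eq]
  refine integral_congr_ae ?_
  filter_upwards [fourier_translate hf a hf'] with ξ hξ
  by_cases h : ξ ∈ Metric.ball (0 : Esp N) A
  · simp only [Set.indicator, h, if_true, hξ, Circle.smul_def]
    simp
  · simp [Set.indicator, h]

end Part3

section Part4
open FourierTransform SchwartzMap LineDeriv
open scoped SchwartzMap
variable {N : ℕ}

lemma L2_lsq (f : L2c N) : ∫⁻ x, ENNReal.ofReal (‖f x‖ ^ 2) = ENNReal.ofReal (‖f‖ ^ 2) := by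
  rw [← L2_sq, ofReal_integral_eq_lintegral_ofReal (L2_sq_int f)
    (Eventually.of_forall fun x => by positivity)]

lemma hiL_lsq (A : ℝ) (f : L2c N) :
    ∫⁻ x, ENNReal.ofReal (‖hiL A f x‖ ^ 2) =
      ∫⁻ ξ, (Metric.ball (0 : Esp N) A)ᶜ.indicator
        (fun ξ => ENNReal.ofReal (‖(𝓕 f : L2c N) ξ‖ ^ 2)) ξ := by
  rw [L2_lsq, ← Lp.norm_fourier_eq, ← L2_lsq]
  refine lintegral_congr_ae ?_
  filter_upwards [hiL_fourier A f] with ξ h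
  rw [h]
  by_cases h : ξ ∈ (Metric.ball (0 : Esp N) A)ᶜ
  · simp only [Set.indicator_of_mem h]
  · simp only [Set.indicator_of_notMem h]
    simp

lemma level_bound (hN : 1 ≤ N) (f : L2c N) (hf : 0 < ‖f‖) {c : ℝ} (hc : 0 < c)
    (hc2 : c ^ 2 = (volume (Metric.ball (0 : Esp N) 1)).toReal) {t : ℝ} (ht : 0 < t) :
    volume {x | t < ‖f x‖} ≤ ENNReal.ofReal (4 / t ^ 2) *
      ∫⁻ ξ, {ξ : Esp N | t ≤ 2 * c * ‖f‖ * ‖ξ‖ ^ ((N:ℝ) / 2)}.indicator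
        (fun ξ => ENNReal.ofReal (‖(𝓕 f : L2c N) ξ‖ ^ 2)) ξ := by
  have hN0 : (0:ℝ) < N := by exact_mod_cast hN
  set R := 2 * c * ‖f‖ with hR
  have hRpos : 0 < R := by positivity
  set A := (t / R) ^ (2 / (N:ℝ)) with hA
  have hApos : 0 < A := by positivity
  have hAN : A ^ ((N:ℝ) / 2) = t / R := by
    rw [hA, ← Real.rpow_mul (by positivity)]
    rw [show 2 / (N:ℝ) * ((N:ℝ) / 2) = 1 by field_simp, Real.rpow_one]
  have hlow : ∀ x, ‖lowF A f x‖ ≤ t / 2 := by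
    intro x
    refine (lowF_norm_le A f x).trans ?_
    rw [Measure.addHaar_ball_of_pos _ _ hApos, ENNReal.toReal_mul,
      ENNReal.toReal_ofReal (by positivity), ← hc2, finrank_euclideanSpace, Fintype.card_fin]
    have : A ^ N * c ^ 2 = (t / R * c) ^ 2 := by
      rw [mul_pow, ← hAN, ← Real.rpow_natCast (A ^ ((N:ℝ)/2)), ← Real.rpow_mul hApos.le]
      rw [show (N:ℝ) / 2 * ((2:ℕ):ℝ) = N by push_cast; ring, Real.rpow_natCast]
    rw [this, Real.sqrt_sq (by positivity), hR]
    apply le_of_eq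
    field_simp
  have h1 : volume {x | t < ‖f x‖} ≤
      volume {x | ENNReal.ofReal ((t / 2) ^ 2) ≤ ENNReal.ofReal (‖hiL A f x‖ ^ 2)} := by
    refine measure_mono_ae ?_
    filter_upwards [low_hi A f] with x hx
    intro h
    change t < ‖f x‖ at h
    change ENNReal.ofReal ((t / 2) ^ 2) ≤ ENNReal.ofReal (‖hiL A f x‖ ^ 2)
    rw [hx] at h
    have h2 := norm_add_le (lowF A f x) (hiL A f x)
    have h3 := hlow x
    apply ENNReal.ofReal_le_ofReal
    gcongr
    linarith
  have hm : Measurable (fun x => ENNReal.ofReal (‖hiL A f x‖ ^ 2)) :=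
    ((Lp.stronglyMeasurable (hiL A f)).measurable.norm.pow_const 2).ennreal_ofReal
  have h2 := mul_meas_ge_le_lintegral (μ := volume) hm (ENNReal.ofReal ((t / 2) ^ 2))
  rw [hiL_lsq] at h2
  have h3 : ∫⁻ ξ, (Metric.ball (0 : Esp N) A)ᶜ.indicator
        (fun ξ => ENNReal.ofReal (‖(𝓕 f : L2c N) ξ‖ ^ 2)) ξ ≤
      ∫⁻ ξ, {ξ : Esp N | t ≤ R * ‖ξ‖ ^ ((N:ℝ) / 2)}.indicator
        (fun ξ => ENNReal.ofReal (‖(𝓕 f : L2c N) ξ‖ ^ 2)) ξ := by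
    refine lintegral_mono fun ξ => ?_
    refine Set.indicator_le_indicator_of_subset ?_ (fun _ => zero_le) ξ
    intro ξ h
    simp only [Set.mem_compl_iff, mem_ball_zero_iff, not_lt] at h
    change t ≤ R * ‖ξ‖ ^ ((N:ℝ) / 2)
    have : t / R ≤ ‖ξ‖ ^ ((N:ℝ) / 2) := by
      rw [← hAN]
      gcongr
    rwa [div_le_iff₀' hRpos] at this
  calc _ ≤ _ := h1
    _ = ENNReal.ofReal (4 / t ^ 2) * (ENNReal.ofReal ((t / 2) ^ 2) *
        volume {x | ENNReal.ofReal ((t / 2) ^ 2) ≤ ENNReal.ofReal (‖hiL A f x‖ ^ 2)}) := by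
      rw [← mul_assoc, ← ENNReal.ofReal_mul (by positivity),
        show 4 / t ^ 2 * (t / 2) ^ 2 = 1 by field_simp; norm_num, ENNReal.ofReal_one, one_mul]
    _ ≤ _ := by
      gcongr
      exact h2.trans h3

lemma inner_int {σ T : ℝ} (hσ : 0 < σ) (hT : 0 ≤ T) :
    ∫⁻ t in Set.Ioi (0:ℝ), (Set.Iic T).indicator (fun t => ENNReal.ofReal (t ^ (2 * σ - 1))) t =
      ENNReal.ofReal (T ^ (2 * σ) / (2 * σ)) := by
  rw [lintegral_indicator measurableSet_Iic, Measure.restrict_restrict measurableSet_Iic,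
    Set.inter_comm, Set.Ioi_inter_Iic]
  have hInt0 : IntervalIntegrable (fun t : ℝ => t ^ (2 * σ - 1)) volume 0 T :=
    intervalIntegral.intervalIntegrable_rpow' (by linarith)
  rw [intervalIntegrable_iff_integrableOn_Ioc_of_le hT] at hInt0
  rw [← ofReal_integral_eq_lintegral_ofReal hInt0]
  · rw [← intervalIntegral.integral_of_le hT, integral_rpow (Or.inl (by linarith))]
    rw [show 2 * σ - 1 + 1 = 2 * σ by ring, Real.zero_rpow (by positivity), sub_zero]
  · filter_upwards [ae_restrict_mem measurableSet_Ioc] with t ht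
    exact Real.rpow_nonneg ht.1.le _

lemma GN_ineq (hN : 1 ≤ N) {σ : ℝ} (hσ : 0 < σ) : ∃ C : ℝ, 0 ≤ C ∧ ∀ f : L2c N,
    ∫⁻ x, ENNReal.ofReal (‖f x‖ ^ (2 * σ + 2)) ≤ ENNReal.ofReal (C * ‖f‖ ^ (2 * σ)) *
      ∫⁻ ξ, ENNReal.ofReal (‖ξ‖ ^ ((N:ℝ) * σ) * ‖(𝓕 f : L2c N) ξ‖ ^ 2) := by
  have hv : 0 < (volume (Metric.ball (0 : Esp N) 1)).toReal :=
    ENNReal.toReal_pos (Metric.measure_ball_pos _ _ one_pos).ne' measure_ball_lt_top.ne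
  set c := Real.sqrt ((volume (Metric.ball (0 : Esp N) 1)).toReal) with hcdef
  have hc : 0 < c := Real.sqrt_pos.2 hv
  have hc2 : c ^ 2 = (volume (Metric.ball (0 : Esp N) 1)).toReal := Real.sq_sqrt hv.le
  refine ⟨(2 * σ + 2) * (4 * ((2 * c) ^ (2 * σ) / (2 * σ))), by positivity, fun f => ?_⟩
  rcases (norm_nonneg f).eq_or_lt with h0 | hf
  · have hz : f = 0 := norm_eq_zero.1 h0.symm
    have : ∫⁻ x, ENNReal.ofReal (‖f x‖ ^ (2 * σ + 2)) = 0 := by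
      rw [lintegral_eq_zero_iff']
      · rw [hz]
        filter_upwards [Lp.coeFn_zero (E := ℂ) (p := 2) (μ := (volume : Measure (Esp N)))] with x hx
        rw [hx]
        simp [Real.zero_rpow (by positivity : 2 * σ + 2 ≠ 0)]
      · exact ((Lp.stronglyMeasurable f).measurable.norm.pow_const _).ennreal_ofReal.aemeasurable
    rw [this]
    exact zero_le
  set g : Esp N → ENNReal := fun ξ => ENNReal.ofReal (‖(𝓕 f : L2c N) ξ‖ ^ 2) with hg
  have hgm : Measurable g :=
    ((Lp.stronglyMeasurable (𝓕 f : L2c N)).measurable.norm.pow_const 2).ennreal_ofReal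
  set T : Esp N → ℝ := fun ξ => 2 * c * ‖f‖ * ‖ξ‖ ^ ((N:ℝ) / 2) with hT
  have hTm : Measurable T := (measurable_norm.pow_const _).const_mul _
  have hT0 : ∀ ξ, 0 ≤ T ξ := fun ξ => by positivity
  rw [lintegral_rpow_eq_lintegral_meas_lt_mul volume (f := fun x => ‖f x‖)
    (Eventually.of_forall fun x => norm_nonneg _)
    (Lp.stronglyMeasurable f).measurable.norm.aemeasurable (by positivity)]
  have step1 : ∫⁻ t in Set.Ioi (0:ℝ), volume {x | t < ‖f x‖} *
        ENNReal.ofReal (t ^ (2 * σ + 2 - 1)) ≤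
      ∫⁻ t in Set.Ioi (0:ℝ), ∫⁻ ξ, ENNReal.ofReal 4 * (g ξ *
        (Set.Iic (T ξ)).indicator (fun t => ENNReal.ofReal (t ^ (2 * σ - 1))) t) := by
    refine lintegral_mono_ae ?_
    filter_upwards [ae_restrict_mem measurableSet_Ioi] with t ht
    have ht : 0 < t := ht
    calc _ ≤ (ENNReal.ofReal (4 / t ^ 2) *
          ∫⁻ ξ, {ξ : Esp N | t ≤ T ξ}.indicator g ξ) * ENNReal.ofReal (t ^ (2 * σ + 2 - 1)) := by
          gcongr
          exact level_bound hN f hf hc hc2 ht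
      _ = (ENNReal.ofReal 4 * ENNReal.ofReal (t ^ (2 * σ - 1))) *
          ∫⁻ ξ, {ξ : Esp N | t ≤ T ξ}.indicator g ξ := by
          rw [mul_right_comm, ← ENNReal.ofReal_mul (by positivity),
            ← ENNReal.ofReal_mul (by positivity)]
          congr 2
          rw [show 2 * σ + 2 - 1 = (2 * σ - 1) + (2:ℕ) by push_cast; ring,
            Real.rpow_add ht, Real.rpow_natCast]
          field_simp
      _ ≤ _ := by
          rw [← lintegral_const_mul _ (hgm.indicator (measurableSet_le measurable_const hTm))]
          refine lintegral_mono fun ξ => ?_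
          by_cases h : t ≤ T ξ
          · rw [Set.indicator_of_mem (show ξ ∈ {ξ : Esp N | t ≤ T ξ} from h),
              Set.indicator_of_mem (show t ∈ Set.Iic (T ξ) from h)]
            rw [mul_assoc, mul_comm (ENNReal.ofReal (t ^ (2 * σ - 1)))]
          · rw [Set.indicator_of_notMem (show ξ ∉ {ξ : Esp N | t ≤ T ξ} from h)]
            simp
  have step2 : ∫⁻ t in Set.Ioi (0:ℝ), ∫⁻ ξ, ENNReal.ofReal 4 * (g ξ *
        (Set.Iic (T ξ)).indicator (fun t => ENNReal.ofReal (t ^ (2 * σ - 1))) t) =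
      ∫⁻ ξ, ENNReal.ofReal 4 * (g ξ * ENNReal.ofReal (T ξ ^ (2 * σ) / (2 * σ))) := by
    rw [lintegral_lintegral_swap]
    · refine lintegral_congr fun ξ => ?_
      have hm : Measurable ((Set.Iic (T ξ)).indicator
          (fun t : ℝ => ENNReal.ofReal (t ^ (2 * σ - 1)))) :=
        (measurable_id.pow_const _).ennreal_ofReal.indicator measurableSet_Iic
      rw [lintegral_const_mul _ (hm.const_mul _), lintegral_const_mul _ hm, inner_int hσ (hT0 ξ)]
    · have e : (fun p : ℝ × Esp N => (Set.Iic (T p.2)).indicator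
            (fun t => ENNReal.ofReal (t ^ (2 * σ - 1))) p.1) =
          {p : ℝ × Esp N | p.1 ≤ T p.2}.indicator
            (fun p => ENNReal.ofReal (p.1 ^ (2 * σ - 1))) := by
        ext p
        simp only [Set.indicator, Set.mem_Iic, Set.mem_setOf_eq]
      have hm : Measurable (fun p : ℝ × Esp N => (Set.Iic (T p.2)).indicator
            (fun t => ENNReal.ofReal (t ^ (2 * σ - 1))) p.1) := by
        rw [e]
        exact (measurable_fst.pow_const _).ennreal_ofReal.indicator
          (measurableSet_le measurable_fst (hTm.comp measurable_snd))
      exact (((hgm.comp measurable_snd).mul hm).const_mul _).aemeasurable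
  calc _ ≤ ENNReal.ofReal (2 * σ + 2) *
        ∫⁻ ξ, ENNReal.ofReal 4 * (g ξ * ENNReal.ofReal (T ξ ^ (2 * σ) / (2 * σ))) := by
        rw [← step2]
        gcongr
    _ = _ := by
        rw [← lintegral_const_mul' _ _ ENNReal.ofReal_ne_top,
          ← lintegral_const_mul' _ _ ENNReal.ofReal_ne_top]
        refine lintegral_congr fun ξ => ?_
        simp only [hg, hT]
        rw [← ENNReal.ofReal_mul (by positivity), ← ENNReal.ofReal_mul (by positivity),
          ← ENNReal.ofReal_mul (by positivity), ← ENNReal.ofReal_mul (by positivity)]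
        congr 1
        rw [Real.mul_rpow (by positivity) (by positivity), Real.mul_rpow (by positivity)
          (by positivity), ← Real.rpow_mul (norm_nonneg _),
          show (N:ℝ) / 2 * (2 * σ) = N * σ by ring]
        ring

end Part4

section Part5
open FourierTransform SchwartzMap LineDeriv
open scoped SchwartzMap
variable {N : ℕ}

/-- The weight comparison used to turn the Fourier-side inequality into Sobolev bounds. -/
def Wt (q ε K : ℝ) : Prop := 0 ≤ ε ∧ 0 ≤ K ∧
  ∀ t : ℝ, 0 ≤ t → t ^ q ≤ ε * (4 * Real.pi ^ 2 * t ^ 2) ^ 2 + K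

lemma Wt_sub {q ε : ℝ} (hq : 0 ≤ q) (hq4 : q < 4) (hε : 0 < ε) : ∃ K, Wt q ε K := by
  set T : ℝ := (ε * (4 * Real.pi ^ 2) ^ 2) ^ (-(1 / (4 - q))) with hT
  have hε' : 0 < ε * (4 * Real.pi ^ 2) ^ 2 := by positivity
  have hTpos : 0 < T := by positivity
  refine ⟨T ^ q, hε.le, by positivity, fun t ht => ?_⟩
  rcases le_total t T with h | h
  · have := Real.rpow_le_rpow ht h hq
    have h2 : 0 ≤ ε * (4 * Real.pi ^ 2 * t ^ 2) ^ 2 := by positivity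
    linarith
  · have htp : 0 < t := hTpos.trans_le h
    have h1 : t ^ q = t ^ (4:ℝ) * t ^ (q - 4) := by
      rw [← Real.rpow_add htp]; ring_nf
    have h2 : t ^ (q - 4) ≤ T ^ (q - 4) :=
      Real.rpow_le_rpow_of_nonpos hTpos h (by linarith)
    have h3 : T ^ (q - 4) = ε * (4 * Real.pi ^ 2) ^ 2 := by
      rw [hT, ← Real.rpow_mul hε'.le]
      have : -(1 / (4 - q)) * (q - 4) = 1 := by
        have : 4 - q ≠ 0 := by linarith
        field_simp; ring
      rw [this, Real.rpow_one]
    have h4 : t ^ (4:ℝ) = t ^ 4 := by exact_mod_cast Real.rpow_natCast t 4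
    have h5 : 0 ≤ T ^ q := by positivity
    rw [h1, h4]
    calc t ^ 4 * t ^ (q - 4) ≤ t ^ 4 * (ε * (4 * Real.pi ^ 2) ^ 2) := by
          rw [← h3]; gcongr
      _ = ε * (4 * Real.pi ^ 2 * t ^ 2) ^ 2 := by ring
      _ ≤ _ := by linarith

lemma Wt_crit : Wt 4 (((4 * Real.pi ^ 2) ^ 2)⁻¹) 0 := by
  refine ⟨by positivity, le_rfl, fun t ht => ?_⟩
  have h4 : t ^ (4:ℝ) = t ^ 4 := by exact_mod_cast Real.rpow_natCast t 4
  have : 0 < Real.pi := Real.pi_pos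
  rw [h4, add_zero]
  apply le_of_eq
  field_simp

lemma Wt_any {q : ℝ} (hq : 0 ≤ q) (hq4 : q ≤ 4) : ∃ ε K, Wt q ε K := by
  rcases hq4.lt_or_eq with h | h
  · obtain ⟨K, hK⟩ := Wt_sub hq h one_pos
    exact ⟨1, K, hK⟩
  · exact ⟨_, _, h ▸ Wt_crit⟩

lemma wt_lint (U : H2 N) {q ε K : ℝ} (hW : Wt q ε K) :
    ∫⁻ ξ : Esp N, ENNReal.ofReal (‖ξ‖ ^ q * ‖U.uh ξ‖ ^ 2) ≤
      ENNReal.ofReal (ε * U.lapSq + K * U.massSq) := by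
  rw [U.lapSq_eq, U.massSq_eq, ← integral_const_mul, ← integral_const_mul,
    ← integral_add (U.lap_int.const_mul ε) ((L2_sq_int _).const_mul _),
    ofReal_integral_eq_lintegral_ofReal (f := fun ξ => ε * ((4 * Real.pi ^ 2 * ‖ξ‖ ^ 2) ^ 2 * ‖U.uh ξ‖ ^ 2)
      + K * ‖U.uh ξ‖ ^ 2) ((U.lap_int.const_mul ε).add ((L2_sq_int _).const_mul _))]
  · refine lintegral_mono fun ξ => ENNReal.ofReal_le_ofReal ?_
    have := hW.2.2 ‖ξ‖ (norm_nonneg _)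
    calc ‖ξ‖ ^ q * ‖U.uh ξ‖ ^ 2 ≤ (ε * (4 * Real.pi ^ 2 * ‖ξ‖ ^ 2) ^ 2 + K) * ‖U.uh ξ‖ ^ 2 := by
          gcongr
      _ = _ := by ring
  · obtain ⟨h1, h2, -⟩ := hW
    exact Eventually.of_forall fun ξ => by simp only [Pi.zero_apply]; positivity

lemma lint_norm_meas (f : L2c N) (p : ℝ) :
    AEStronglyMeasurable (fun x => ‖f x‖ ^ p) volume :=
  ((Lp.aestronglyMeasurable f).norm.aemeasurable.pow_const p).aestronglyMeasurable

lemma H2.pPow_bound {σ : ℝ} (hσ : 0 < σ) {C : ℝ} (hC : 0 ≤ C) (hGN : ∀ f : L2c N,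
      ∫⁻ x, ENNReal.ofReal (‖f x‖^(2*σ+2)) ≤ ENNReal.ofReal (C*‖f‖^(2*σ)) *
        ∫⁻ ξ, ENNReal.ofReal (‖ξ‖^((N:ℝ)*σ) * ‖(𝓕 f : L2c N) ξ‖^2))
    {ε K : ℝ} (hW : Wt ((N:ℝ) * σ) ε K) (U : H2 N) :
    Integrable (fun x => ‖U.u x‖ ^ (2 * σ + 2)) volume ∧
    U.pPow σ ≤ C * U.massSq ^ σ * (ε * U.lapSq + K * U.massSq) := by
  have hae : (fun x => ‖U.u x‖ ^ (2 * σ + 2)) =ᵐ[volume] fun x => ‖U.uL x‖ ^ (2 * σ + 2) := by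
    filter_upwards [U.u_mem.coeFn_toLp] with x hx
    rw [H2.uL, hx]
  have h0 : 0 ≤ C * U.massSq ^ σ * (ε * U.lapSq + K * U.massSq) := by
    have := U.massSq_nonneg; have := U.lapSq_nonneg; obtain ⟨h1, h2, -⟩ := hW
    positivity
  have hb : ∫⁻ x, ENNReal.ofReal (‖U.uL x‖^(2*σ+2)) ≤
      ENNReal.ofReal (C * U.massSq ^ σ * (ε * U.lapSq + K * U.massSq)) := by
    refine (hGN _).trans ?_
    have : ‖U.uL‖ ^ (2 * σ) = U.massSq ^ σ := by
      rw [U.massSq_norm, ← Real.rpow_natCast, ← Real.rpow_mul (norm_nonneg _)]; norm_num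
    rw [this, ENNReal.ofReal_mul (p := C * U.massSq ^ σ) (by have := U.massSq_nonneg; positivity)]
    exact mul_le_mul_right (wt_lint U hW) _
  have hm := lint_norm_meas U.uL (2 * σ + 2)
  have hInt0 : Integrable (fun x => ‖U.uL x‖ ^ (2 * σ + 2)) volume := by
    refine ⟨hm, ?_⟩
    rw [hasFiniteIntegral_iff_ofReal (Eventually.of_forall fun x => by positivity)]
    exact hb.trans_lt ENNReal.ofReal_lt_top
  refine ⟨hInt0.congr hae.symm, ?_⟩
  rw [H2.pPow, integral_congr_ae hae, integral_eq_lintegral_of_nonneg_ae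
    (Eventually.of_forall fun x => by positivity) hm]
  exact ENNReal.toReal_le_of_le_ofReal h0 hb

lemma H2.hi_mass (U : H2 N) {A : ℝ} (hA : 0 < A) :
    ‖hiL A U.uL‖ ^ 2 ≤ U.lapSq / (4 * Real.pi ^ 2 * A ^ 2) ^ 2 := by
  have hpi := Real.pi_pos
  have h0 : 0 ≤ U.lapSq / (4 * Real.pi ^ 2 * A ^ 2) ^ 2 := by
    have := U.lapSq_nonneg; positivity
  rw [← ENNReal.ofReal_le_ofReal_iff h0, ← L2_lsq, hiL_lsq, U.lapSq_eq, ← integral_div,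
    ofReal_integral_eq_lintegral_ofReal (U.lap_int.div_const _)
      (Eventually.of_forall fun ξ => by positivity)]
  refine lintegral_mono fun ξ => ?_
  by_cases hξ : ξ ∈ (Metric.ball (0 : Esp N) A)ᶜ
  · rw [Set.indicator_of_mem hξ]
    refine ENNReal.ofReal_le_ofReal ?_
    have : A ≤ ‖ξ‖ := by simpa using hξ
    rw [le_div_iff₀ (by positivity), mul_comm]
    have h1 : (4 * Real.pi ^ 2 * A ^ 2) ^ 2 ≤ (4 * Real.pi ^ 2 * ‖ξ‖ ^ 2) ^ 2 := by gcongr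
    exact mul_le_mul_of_nonneg_right h1 (by positivity)
  · rw [Set.indicator_of_notMem hξ]; exact zero_le

lemma H2.hi_pPow {σ : ℝ} (hσ : 0 < σ) {C : ℝ} (hC : 0 ≤ C) (hGN : ∀ f : L2c N,
      ∫⁻ x, ENNReal.ofReal (‖f x‖^(2*σ+2)) ≤ ENNReal.ofReal (C*‖f‖^(2*σ)) *
        ∫⁻ ξ, ENNReal.ofReal (‖ξ‖^((N:ℝ)*σ) * ‖(𝓕 f : L2c N) ξ‖^2))
    {ε K : ℝ} (hW : Wt ((N:ℝ) * σ) ε K) (U : H2 N) {A : ℝ} (hA : 0 < A) :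
    ∫⁻ x, ENNReal.ofReal (‖hiL A U.uL x‖^(2*σ+2)) ≤
      ENNReal.ofReal (C * (U.lapSq / (4 * Real.pi ^ 2 * A ^ 2) ^ 2) ^ σ *
        (ε * U.lapSq + K * U.massSq)) := by
  refine (hGN _).trans ?_
  have hpi := Real.pi_pos
  have hl := U.lapSq_nonneg
  rw [ENNReal.ofReal_mul (p := C * (U.lapSq / (4 * Real.pi ^ 2 * A ^ 2) ^ 2) ^ σ) (by positivity)]
  refine mul_le_mul' (ENNReal.ofReal_le_ofReal (mul_le_mul_of_nonneg_left ?_ hC)) ?_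
  · have : ‖hiL A U.uL‖ ^ (2 * σ) = (‖hiL A U.uL‖ ^ 2) ^ σ := by
      rw [← Real.rpow_natCast, ← Real.rpow_mul (norm_nonneg _)]; norm_num
    rw [this]
    exact Real.rpow_le_rpow (by positivity) (U.hi_mass hA) hσ.le
  · refine le_trans (lintegral_mono_ae ?_) (wt_lint U hW)
    filter_upwards [hiL_fourier A U.uL] with ξ hξ
    rw [hξ]
    refine ENNReal.ofReal_le_ofReal ?_
    gcongr
    exact norm_indicator_le_norm_self _ _

lemma H2.pPow_nonneg (σ : ℝ) (U : H2 N) : 0 ≤ U.pPow σ := integral_nonneg fun _ => by positivity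

lemma rLp_two {f : Esp N → ℂ} (hf : MemLp f 2 volume) : rLp 2 f = √(∫ x, ‖f x‖ ^ 2) := by
  have h2 : ENNReal.ofReal 2 = 2 := by norm_num
  rw [toLp_sq hf, Real.sqrt_sq (norm_nonneg _), rLp, h2, Lp.norm_toLp]

/-- Coercivity: the nonlinear term is controlled by the Laplacian near mass `m`. -/
lemma coercive (hN : 1 ≤ N) {σ : ℝ} (hσ : 0 < σ) {m : ℝ} (hm : 0 < m)
    (hcase : (N : ℝ) * σ < 4 ∨ ((N : ℝ) * σ = 4 ∧ m < kstar N σ)) :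
    ∃ θ K M0 : ℝ, 0 ≤ θ ∧ θ < 1 ∧ 0 ≤ K ∧ m < M0 ∧ ∀ U : H2 N, U.massSq ≤ M0 →
      (1 / (σ + 1)) * U.pPow σ ≤ θ * U.lapSq + K := by
  obtain ⟨C, hC, hGN⟩ := GN_ineq hN hσ
  have hNpos : (0:ℝ) < N := by exact_mod_cast hN
  rcases hcase with h | ⟨h4, hk⟩
  · set D := C * (m + 1) ^ σ with hD
    have hDn : 0 ≤ D := by positivity
    obtain ⟨K, hW⟩ := Wt_sub (ε := 1 / (2 * (D + 1))) (by positivity) h (by positivity)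
    have hK := hW.2.1
    refine ⟨1 / 2, D * (K * (m + 1)), m + 1, by norm_num, by norm_num, by positivity,
      by linarith, fun U hU => ?_⟩
    obtain ⟨-, hb⟩ := U.pPow_bound hσ hC hGN hW
    have hmn := U.massSq_nonneg
    have hl := U.lapSq_nonneg
    have hp := U.pPow_nonneg σ
    have h1 : (1 / (σ + 1)) * U.pPow σ ≤ U.pPow σ := by
      rw [one_div]
      exact mul_le_of_le_one_left hp (inv_le_one_of_one_le₀ (by linarith))
    have h2 : C * U.massSq ^ σ * (1 / (2 * (D + 1)) * U.lapSq + K * U.massSq) ≤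
        D * (1 / (2 * (D + 1)) * U.lapSq + K * (m + 1)) := by
      have : C * U.massSq ^ σ ≤ D := by rw [hD]; gcongr
      gcongr
    have h3 : D * (1 / (2 * (D + 1))) ≤ 1 / 2 := by
      rw [mul_one_div, div_le_div_iff₀ (by positivity) (by positivity)]; linarith
    have h4 := mul_le_mul_of_nonneg_right h3 hl
    nlinarith
  · have hW := Wt_crit
    generalize ((4 * Real.pi ^ 2) ^ 2)⁻¹ = c0 at hW
    rw [← h4] at hW
    have hmk : 0 < kstar N σ := hm.trans hk
    have hB : GNconst N σ ≠ 0 := by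
      intro h0
      rw [kstar, h0, Real.zero_rpow (by simp [hσ.ne']), mul_zero] at hmk
      exact lt_irrefl _ hmk
    have hexp1 : (N:ℝ) * σ / 2 = 2 := by rw [h4]; norm_num
    have hexp2 : 2 + 2 * σ - (N:ℝ) * σ / 2 = 2 * σ := by rw [h4]; ring
    have hden : ∀ U : H2 N, (rLp 2 U.lapl ^ ((N : ℝ) * σ / 2) *
        rLp 2 U.u ^ (2 + 2 * σ - (N : ℝ) * σ / 2)) = U.lapSq * U.massSq ^ σ := by
      intro U
      rw [hexp2, hexp1, rLp_two U.lapl_mem, rLp_two U.u_mem]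
      change √U.lapSq ^ (2:ℝ) * √U.massSq ^ (2 * σ) = _
      rw [Real.rpow_mul (Real.sqrt_nonneg _), Real.rpow_two, Real.rpow_two,
        Real.sq_sqrt U.massSq_nonneg, Real.sq_sqrt U.lapSq_nonneg]
    have hbdd : BddAbove {r : ℝ | ∃ U : H2 N, U.Nontriv ∧ r = U.pPow σ /
      (rLp 2 U.lapl ^ ((N : ℝ) * σ / 2) * rLp 2 U.u ^ (2 + 2 * σ - (N : ℝ) * σ / 2))} := by
      by_contra hcon
      exact hB (Real.sSup_of_not_bddAbove hcon)
    have hBpos : 0 < GNconst N σ := by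
      refine lt_of_le_of_ne (Real.sSup_nonneg ?_) hB.symm
      rintro r ⟨U, -, rfl⟩
      rw [hden]
      exact div_nonneg (U.pPow_nonneg σ) (mul_nonneg U.lapSq_nonneg (by
        have := U.massSq_nonneg; positivity))
    set B := GNconst N σ with hBdef
    have key : ∀ U : H2 N, U.pPow σ ≤ B * (U.massSq ^ σ * U.lapSq) := by
      intro U
      have hb := (U.pPow_bound hσ hC hGN hW).2
      have hmn := U.massSq_nonneg
      have hl := U.lapSq_nonneg
      have hp := U.pPow_nonneg σ
      by_cases hz : U.lapSq * U.massSq ^ σ = 0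
      · have : U.pPow σ ≤ 0 := by
          refine hb.trans (le_of_eq ?_)
          linear_combination (C * c0) * hz
        have h2 : 0 ≤ B * (U.massSq ^ σ * U.lapSq) := by positivity
        linarith
      · have hpos : 0 < U.lapSq * U.massSq ^ σ := lt_of_le_of_ne (by positivity) (Ne.symm hz)
        have hnt : U.Nontriv := by
          intro h0
          apply hz
          have : U.massSq = 0 := by
            rw [H2.massSq, integral_eq_zero_of_ae]
            filter_upwards [h0] with x hx
            simp [hx]
          rw [this, Real.zero_rpow hσ.ne', mul_zero]
        have := le_csSup hbdd ⟨U, hnt, rfl⟩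
        rw [hden, div_le_iff₀ hpos] at this
        change _ ≤ B * _ at this
        linarith
    have hlt : B * m ^ σ < σ + 1 := by
      have h1 : m ^ σ < (kstar N σ) ^ σ := Real.rpow_lt_rpow hm.le hk hσ
      have h2 : (kstar N σ) ^ σ = (σ + 1) * B⁻¹ := by
        rw [kstar, Real.mul_rpow (by positivity) (by positivity), ← Real.rpow_mul (by positivity),
          ← Real.rpow_mul hBpos.le]
        have e1 : 1 / σ * σ = 1 := by field_simp
        have e2 : -(1 / σ) * σ = -1 := by field_simp
        rw [e1, e2, Real.rpow_one, Real.rpow_neg_one]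
      rw [h2] at h1
      calc B * m ^ σ < B * ((σ + 1) * B⁻¹) := by gcongr
        _ = σ + 1 := by field_simp
    have hcont : Tendsto (fun M : ℝ => B * M ^ σ) (𝓝[>] m) (𝓝 (B * m ^ σ)) :=
      ((continuousAt_const.mul (Real.continuousAt_rpow_const m σ (Or.inl hm.ne'))).tendsto).mono_left
        nhdsWithin_le_nhds
    obtain ⟨M0, hM0, hM1⟩ := ((hcont.eventually_lt_const hlt).and self_mem_nhdsWithin).exists
    have hM1' : m < M0 := hM1
    have hM0p : 0 < M0 := hm.trans hM1'
    refine ⟨B * M0 ^ σ / (σ + 1), 0, M0, by positivity, ?_, le_rfl, hM1', fun U hU => ?_⟩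
    · rw [div_lt_one (by positivity)]; exact hM0
    · have hmn := U.massSq_nonneg
      have hl := U.lapSq_nonneg
      have h1 : U.pPow σ ≤ B * (M0 ^ σ * U.lapSq) := by
        refine (key U).trans ?_
        gcongr
      calc (1 / (σ + 1)) * U.pPow σ ≤ (1 / (σ + 1)) * (B * (M0 ^ σ * U.lapSq)) := by gcongr
        _ = _ := by ring

end Part5

section Part6
open FourierTransform SchwartzMap LineDeriv
open scoped SchwartzMap
variable {N : ℕ}

lemma TestFun.lap {φ : Esp N → ℂ} (h : TestFun φ) : TestFun (lapC φ) := by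
  refine ⟨?_, ?_⟩
  · exact ContDiff.sum fun i _ => ((h.pderiv i).pderiv i).1
  · have : lapC φ = ∑ i, pderivC i (pderivC i φ) := by ext x; simp [lapC]
    rw [this]
    have hs : ∀ s : Finset (Fin N), HasCompactSupport (∑ i ∈ s, pderivC i (pderivC i φ)) := by
      intro s
      induction s using Finset.induction_on with
      | empty => simp [HasCompactSupport.zero]
      | insert i s hi ih =>
        rw [Finset.sum_insert hi]
        exact ((h.pderiv i).pderiv i).2.add ih
    exact hs _

lemma TestFun.shift {φ : Esp N → ℂ} (h : TestFun φ) (a : Esp N) : TestFun (fun x => φ (x - a)) := by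
  refine ⟨h.1.comp (contDiff_id.sub contDiff_const), ?_⟩
  exact h.2.comp_homeomorph (Homeomorph.subRight a)

lemma pderivC_shift (φ : Esp N → ℂ) (a : Esp N) (i : Fin N) :
    pderivC i (fun x => φ (x - a)) = fun x => pderivC i φ (x - a) := by
  ext x
  simp only [pderivC]
  rw [fderiv_comp_sub]

lemma lapC_shift (φ : Esp N → ℂ) (a : Esp N) :
    lapC (fun x => φ (x - a)) = fun x => lapC φ (x - a) := by
  ext x
  simp only [lapC, pderivC_shift]

lemma memLp_shift {f : Esp N → ℂ} (hf : MemLp f 2 volume) (a : Esp N) :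
    MemLp (fun x => f (x + a)) 2 volume :=
  hf.comp_measurePreserving (measurePreserving_add_right volume a)

/-- Translation of an `H²` function. -/
def H2.shift (U : H2 N) (a : Esp N) : H2 N where
  u := fun x => U.u (x + a)
  grad := fun i x => U.grad i (x + a)
  lapl := fun x => U.lapl (x + a)
  u_mem := memLp_shift U.u_mem a
  grad_mem := fun i => memLp_shift (U.grad_mem i) a
  lapl_mem := memLp_shift U.lapl_mem a
  grad_spec := by
    intro i φ hφ
    have := U.grad_spec i _ (hφ.shift a)
    rw [pderivC_shift] at this
    rw [← integral_add_right_eq_self (fun x => U.u x * pderivC i φ (x - a)) a,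
      ← integral_add_right_eq_self (fun x => U.grad i x * φ (x - a)) a] at this
    simpa using this
  lapl_spec := by
    intro φ hφ
    have := U.lapl_spec _ (hφ.shift a)
    rw [lapC_shift] at this
    rw [← integral_add_right_eq_self (fun x => U.u x * lapC φ (x - a)) a,
      ← integral_add_right_eq_self (fun x => U.lapl x * φ (x - a)) a] at this
    simpa using this

lemma H2.shift_massSq (U : H2 N) (a : Esp N) : (U.shift a).massSq = U.massSq :=
  integral_add_right_eq_self (fun x => ‖U.u x‖ ^ 2) a
lemma H2.shift_lapSq (U : H2 N) (a : Esp N) : (U.shift a).lapSq = U.lapSq :=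
  integral_add_right_eq_self (fun x => ‖U.lapl x‖ ^ 2) a
lemma H2.shift_gradSq (U : H2 N) (a : Esp N) : (U.shift a).gradSq = U.gradSq :=
  Finset.sum_congr rfl fun i _ => integral_add_right_eq_self (fun x => ‖U.grad i x‖ ^ 2) a
lemma H2.shift_pPow (σ : ℝ) (U : H2 N) (a : Esp N) : (U.shift a).pPow σ = U.pPow σ :=
  integral_add_right_eq_self (fun x => ‖U.u x‖ ^ (2 * σ + 2)) a
lemma H2.shift_energy (σ : ℝ) (U : H2 N) (a : Esp N) : (U.shift a).energy σ = U.energy σ := by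
  simp only [H2.energy, H2.shift_lapSq, H2.shift_gradSq, H2.shift_pPow]

/-- Difference of `H²` functions. -/
def H2.sub (U V : H2 N) : H2 N where
  u := fun x => U.u x - V.u x
  grad := fun i x => U.grad i x - V.grad i x
  lapl := fun x => U.lapl x - V.lapl x
  u_mem := U.u_mem.sub V.u_mem
  grad_mem := fun i => (U.grad_mem i).sub (V.grad_mem i)
  lapl_mem := U.lapl_mem.sub V.lapl_mem
  grad_spec := by
    intro i φ hφ
    have h1 := hφ.memLp
    have h2 := (hφ.pderiv i).memLp
    simp only [sub_mul]
    rw [integral_sub (integrable_mul_L2 U.u_mem h2) (integrable_mul_L2 V.u_mem h2),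
      integral_sub (integrable_mul_L2 (U.grad_mem i) h1) (integrable_mul_L2 (V.grad_mem i) h1),
      U.grad_spec i φ hφ, V.grad_spec i φ hφ]
    ring
  lapl_spec := by
    intro φ hφ
    have h1 := hφ.memLp
    have h2 := hφ.lap.memLp
    simp only [sub_mul]
    rw [integral_sub (integrable_mul_L2 U.u_mem h2) (integrable_mul_L2 V.u_mem h2),
      integral_sub (integrable_mul_L2 U.lapl_mem h1) (integrable_mul_L2 V.lapl_mem h1),
      U.lapl_spec φ hφ, V.lapl_spec φ hφ]

/-- Real multiple of an `H²` function. -/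
def H2.rsmul (c : ℝ) (U : H2 N) : H2 N where
  u := fun x => (c : ℂ) * U.u x
  grad := fun i x => (c : ℂ) * U.grad i x
  lapl := fun x => (c : ℂ) * U.lapl x
  u_mem := U.u_mem.const_mul _
  grad_mem := fun i => (U.grad_mem i).const_mul _
  lapl_mem := U.lapl_mem.const_mul _
  grad_spec := by
    intro i φ hφ
    simp only [mul_assoc]
    rw [integral_const_mul, integral_const_mul, U.grad_spec i φ hφ]
    ring
  lapl_spec := by
    intro φ hφ
    simp only [mul_assoc]
    rw [integral_const_mul, integral_const_mul, U.lapl_spec φ hφ]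

lemma H2.rsmul_massSq (c : ℝ) (U : H2 N) : (U.rsmul c).massSq = c ^ 2 * U.massSq := by
  simp only [H2.massSq, H2.rsmul, norm_mul, mul_pow]
  rw [integral_const_mul]; simp
lemma H2.rsmul_lapSq (c : ℝ) (U : H2 N) : (U.rsmul c).lapSq = c ^ 2 * U.lapSq := by
  simp only [H2.lapSq, H2.rsmul, norm_mul, mul_pow]
  rw [integral_const_mul]; simp
lemma H2.rsmul_gradSq (c : ℝ) (U : H2 N) : (U.rsmul c).gradSq = c ^ 2 * U.gradSq := by
  simp only [H2.gradSq, H2.rsmul, norm_mul, mul_pow]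
  simp only [integral_const_mul, ← Finset.mul_sum]; simp
lemma H2.rsmul_pPow (σ : ℝ) {c : ℝ} (hc : 0 ≤ c) (U : H2 N) :
    (U.rsmul c).pPow σ = c ^ (2 * σ + 2) * U.pPow σ := by
  simp only [H2.pPow, H2.rsmul, norm_mul]
  simp_rw [Real.mul_rpow (norm_nonneg _) (norm_nonneg _)]
  rw [integral_const_mul]; simp [abs_of_nonneg hc]

lemma H2.rsmul_sqrt {σ : ℝ} (hσ : 0 < σ) {s : ℝ} (hs : 0 < s) (U : H2 N) :
    (U.rsmul √s).massSq = s * U.massSq ∧ (U.rsmul √s).energy σ =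
      s * (U.lapSq - 2 * U.gradSq) - s ^ (σ + 1) * ((1 / (σ + 1)) * U.pPow σ) := by
  have h1 : √s ^ 2 = s := Real.sq_sqrt hs.le
  have h2 : √s ^ (2 * σ + 2) = s ^ (σ + 1) := by
    rw [show 2 * σ + 2 = 2 * (σ + 1) by ring, Real.rpow_mul (Real.sqrt_nonneg _), Real.rpow_two, h1]
  refine ⟨by rw [H2.rsmul_massSq, h1], ?_⟩
  rw [H2.energy, H2.rsmul_lapSq, H2.rsmul_gradSq, H2.rsmul_pPow σ (Real.sqrt_nonneg _), h1, h2]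
  ring

end Part6

section Part7
open FourierTransform SchwartzMap LineDeriv
open scoped SchwartzMap
variable {N : ℕ}

lemma tendsto_hi {σ : ℝ} (hσ : 0 < σ) (C L D : ℝ) :
    Tendsto (fun A : ℝ => C * (L / (4 * Real.pi ^ 2 * A ^ 2) ^ 2) ^ σ * D) atTop (𝓝 0) := by
  have hpi := Real.pi_pos
  have h1 : Tendsto (fun A : ℝ => L / (4 * Real.pi ^ 2 * A ^ 2) ^ 2) atTop (𝓝 0) := by
    refine Tendsto.const_div_atTop ?_ L
    refine (tendsto_pow_atTop two_ne_zero).comp ?_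
    exact (tendsto_pow_atTop two_ne_zero).const_mul_atTop (by positivity)
  have h2 := h1.rpow_const (p := σ) (Or.inr hσ.le)
  rw [Real.zero_rpow hσ.ne'] at h2
  simpa using (h2.const_mul C).mul_const D

lemma nonvanishing (hN : 1 ≤ N) {σ : ℝ} (hσ : 0 < σ) (h4 : (N : ℝ) * σ ≤ 4) {M L δ : ℝ}
    (hM : 0 ≤ M) (hL : 0 ≤ L) (hδ : 0 < δ) :
    ∃ A ε : ℝ, 0 < A ∧ 0 < ε ∧ ∀ U : H2 N, U.massSq ≤ M → U.lapSq ≤ L → δ ≤ U.pPow σ →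
      ∃ x, ε ≤ ‖lowF A U.uL x‖ := by
  obtain ⟨C, hC, hGN⟩ := GN_ineq hN hσ
  have hNpos : (0:ℝ) < N := by exact_mod_cast hN
  obtain ⟨e, K, hW⟩ := Wt_any (by positivity) h4
  have he := hW.1
  have hK := hW.2.1
  have hpp : 0 < (2:ℝ) ^ (2 * σ + 2) := by positivity
  obtain ⟨A, hA1, hA⟩ := (((tendsto_hi hσ C L (e * L + K * M)).eventually_lt_const
    (show 0 < δ / 4 / (2:ℝ) ^ (2 * σ + 2) by positivity)).and (eventually_gt_atTop 0)).exists
  have hM1 : 0 < δ / (4 * (M + 1)) := by positivity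
  refine ⟨A, (δ / (4 * (M + 1))) ^ (1 / (2 * σ)) / 2, hA, by positivity, fun U hUM hUL hUp => ?_⟩
  by_contra! hcon
  set ε := (δ / (4 * (M + 1))) ^ (1 / (2 * σ)) / 2 with hε
  have hεp : 0 < ε := by positivity
  have h2ε : (2 * ε) ^ (2 * σ) = δ / (4 * (M + 1)) := by
    rw [hε, mul_div_cancel₀ _ two_ne_zero, ← Real.rpow_mul hM1.le, one_div,
      inv_mul_cancel₀ (by positivity), Real.rpow_one]
  have hl := U.lapSq_nonneg
  have hmn := U.massSq_nonneg
  have hpt : ∀ᵐ x, ENNReal.ofReal (‖U.uL x‖ ^ (2 * σ + 2)) ≤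
      ENNReal.ofReal ((2:ℝ) ^ (2 * σ + 2)) * ENNReal.ofReal (‖hiL A U.uL x‖ ^ (2 * σ + 2)) +
      ENNReal.ofReal (δ / (4 * (M + 1))) * ENNReal.ofReal (‖U.uL x‖ ^ 2) := by
    filter_upwards [low_hi A U.uL] with x hx
    rw [← ENNReal.ofReal_mul (by positivity), ← ENNReal.ofReal_mul (by positivity),
      ← ENNReal.ofReal_add (by positivity) (by positivity)]
    refine ENNReal.ofReal_le_ofReal ?_
    have h1 : ‖U.uL x‖ ≤ ‖lowF A U.uL x‖ + ‖hiL A U.uL x‖ := by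
      conv_lhs => rw [hx]
      exact norm_add_le _ _
    have h2 := hcon x
    rw [← Real.mul_rpow two_pos.le (norm_nonneg _), ← h2ε]
    rcases le_total ‖U.uL x‖ (2 * ‖hiL A U.uL x‖) with h | h
    · have := Real.rpow_le_rpow (norm_nonneg _) h (show 0 ≤ 2 * σ + 2 by positivity)
      have h5 : 0 ≤ (2 * ε) ^ (2 * σ) * ‖U.uL x‖ ^ 2 := by positivity
      linarith
    · have h3 : ‖U.uL x‖ ≤ 2 * ε := by linarith
      have h5 : 0 ≤ (2 * ‖hiL A U.uL x‖) ^ (2 * σ + 2) := by positivity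
      rw [Real.rpow_add_of_nonneg (norm_nonneg _) (by positivity) two_pos.le, Real.rpow_two]
      have h6 : ‖U.uL x‖ ^ (2 * σ) * ‖U.uL x‖ ^ 2 ≤ (2 * ε) ^ (2 * σ) * ‖U.uL x‖ ^ 2 := by gcongr
      linarith
  have h1 := lintegral_mono_ae hpt
  rw [lintegral_add_right' _ (((Lp.aestronglyMeasurable U.uL).norm.aemeasurable.pow_const
      2).ennreal_ofReal.const_mul _), lintegral_const_mul' _ _ ENNReal.ofReal_ne_top,
    lintegral_const_mul' _ _ ENNReal.ofReal_ne_top, L2_lsq, ← U.massSq_norm] at h1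
  have h2 : ∫⁻ x, ENNReal.ofReal (‖hiL A U.uL x‖ ^ (2 * σ + 2)) ≤
      ENNReal.ofReal (δ / 4 / (2:ℝ) ^ (2 * σ + 2)) := by
    refine (U.hi_pPow hσ hC hGN hW hA).trans (ENNReal.ofReal_le_ofReal ?_)
    refine le_trans ?_ hA1.le
    gcongr
  have h3 : ENNReal.ofReal (U.pPow σ) = ∫⁻ x, ENNReal.ofReal (‖U.uL x‖ ^ (2 * σ + 2)) := by
    rw [H2.pPow, ofReal_integral_eq_lintegral_ofReal (U.pPow_bound hσ hC hGN hW).1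
      (Eventually.of_forall fun x => by positivity)]
    refine lintegral_congr_ae ?_
    filter_upwards [U.u_mem.coeFn_toLp] with x hx
    rw [H2.uL, hx]
  rw [← h3] at h1
  have h4 : ENNReal.ofReal (U.pPow σ) ≤ ENNReal.ofReal ((2:ℝ) ^ (2 * σ + 2) *
      (δ / 4 / (2:ℝ) ^ (2 * σ + 2)) + δ / (4 * (M + 1)) * U.massSq) := by
    refine h1.trans ?_
    rw [ENNReal.ofReal_add (by positivity) (by positivity), ENNReal.ofReal_mul (by positivity),
      ENNReal.ofReal_mul (by positivity)]
    gcongr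
  rw [ENNReal.ofReal_le_ofReal_iff (by positivity), mul_div_cancel₀ _ hpp.ne'] at h4
  have h5 : δ / (4 * (M + 1)) * U.massSq ≤ δ / 4 := by
    calc δ / (4 * (M + 1)) * U.massSq ≤ δ / (4 * (M + 1)) * (M + 1) := by gcongr; linarith
      _ = δ / 4 := by field_simp
  linarith

end Part7

section Part8
open FourierTransform SchwartzMap LineDeriv
open scoped SchwartzMap
variable {N : ℕ}

/-- Weak convergence in `L²`. -/
def WConv (f : ℕ → L2c N) (g : L2c N) : Prop :=
  ∀ h : L2c N, Tendsto (fun n => inner ℂ h (f n)) atTop (𝓝 (inner ℂ h g))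

lemma WConv.comp {f : ℕ → L2c N} {g : L2c N} (h : WConv f g) {φ : ℕ → ℕ} (hφ : StrictMono φ) :
    WConv (fun n => f (φ n)) g := fun k => (h k).comp hφ.tendsto_atTop

lemma sep_L2c : TopologicalSpace.SeparableSpace (L2c N) := by
  have : Fact ((2 : ENNReal) ≠ ⊤) := ⟨by norm_num⟩
  infer_instance

lemma weak_seq (f : ℕ → L2c N) (R : ℝ) (hf : ∀ n, ‖f n‖ ≤ R) :
    ∃ g : L2c N, ∃ φ : ℕ → ℕ, StrictMono φ ∧ WConv (fun n => f (φ n)) g := by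
  have := sep_L2c (N := N)
  have hc := WeakDual.isSeqCompact_closedBall ℂ (L2c N) 0 R
  obtain ⟨a, -, φ, hφ, ha⟩ := hc.subseq_of_frequently_in
    (x := fun n => StrongDual.toWeakDual (InnerProductSpace.toDual ℂ (L2c N) (f n)))
    (Frequently.of_forall fun n => by
      simp only [Set.mem_preimage, mem_closedBall_zero_iff]
      change ‖InnerProductSpace.toDual ℂ (L2c N) (f n)‖ ≤ R
      rw [LinearIsometryEquiv.norm_map]; exact hf n)
  refine ⟨(InnerProductSpace.toDual ℂ (L2c N)).symm (WeakDual.toStrongDual a), φ, hφ, fun h => ?_⟩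
  have h1 := ((WeakDual.eval_continuous (𝕜 := ℂ) h).tendsto a).comp ha
  have h2 : Tendsto (fun n => inner ℂ (f (φ n)) h) atTop
      (𝓝 (inner ℂ ((InnerProductSpace.toDual ℂ (L2c N)).symm (WeakDual.toStrongDual a)) h)) := by
    rw [InnerProductSpace.toDual_symm_apply]
    exact h1
  have h3 := (Complex.continuous_conj.tendsto _).comp h2
  simp only [Function.comp_def, inner_conj_symm] at h3
  exact h3

lemma weak_seq_fin {ι : Type*} [DecidableEq ι] (f : ι → ℕ → L2c N) (R : ℝ)
    (hf : ∀ i n, ‖f i n‖ ≤ R) (s : Finset ι) :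
    ∃ φ : ℕ → ℕ, StrictMono φ ∧ ∀ i ∈ s, ∃ g, WConv (fun n => f i (φ n)) g := by
  induction s using Finset.induction_on with
  | empty => exact ⟨id, strictMono_id, by simp⟩
  | insert i s hi ih =>
    obtain ⟨φ, hφ, h⟩ := ih
    obtain ⟨g, φ', hφ', hg⟩ := weak_seq (fun n => f i (φ n)) R (fun n => hf i _)
    refine ⟨φ ∘ φ', hφ.comp hφ', fun j hj => ?_⟩
    rcases Finset.mem_insert.1 hj with rfl | hj
    · exact ⟨g, hg⟩
    · obtain ⟨g', hg'⟩ := h j hj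
      exact ⟨g', hg'.comp hφ'⟩

lemma pair_inner {f ψ : Esp N → ℂ} (hψ : MemLp ψ 2 volume) (hf : MemLp f 2 volume) :
    ∫ x, f x * ψ x = inner ℂ (hψ.star.toLp _) (hf.toLp f) := by
  rw [L2.inner_def]
  refine integral_congr_ae ?_
  filter_upwards [hψ.star.coeFn_toLp, hf.coeFn_toLp] with x h1 h2
  rw [h1, h2]
  simp [RCLike.inner_apply]

lemma WConv.pair {f : ℕ → Esp N → ℂ} (hf : ∀ n, MemLp (f n) 2 volume) {g : L2c N}
    (h : WConv (fun n => (hf n).toLp _) g) {ψ : Esp N → ℂ} (hψ : MemLp ψ 2 volume) :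
    Tendsto (fun n => ∫ x, f n x * ψ x) atTop (𝓝 (∫ x, g x * ψ x)) := by
  have h1 := h (hψ.star.toLp _)
  rw [show inner ℂ (hψ.star.toLp _) g = ∫ x, g x * ψ x by
    rw [pair_inner hψ (Lp.memLp g), Lp.toLp_coeFn]] at h1
  refine h1.congr fun n => ?_
  rw [pair_inner hψ (hf n)]

def H2.gL (U : H2 N) (i : Fin N) : L2c N := (U.grad_mem i).toLp (U.grad i)
def H2.lL (U : H2 N) : L2c N := U.lapl_mem.toLp U.lapl
lemma H2.lapSq_norm (U : H2 N) : U.lapSq = ‖U.lL‖ ^ 2 := toLp_sq U.lapl_mem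
lemma H2.gradSq_norm (U : H2 N) : U.gradSq = ∑ i, ‖U.gL i‖ ^ 2 :=
  Finset.sum_congr rfl fun i _ => toLp_sq (U.grad_mem i)

/-- Weak convergence in `H²`. -/
structure WH2 (v : ℕ → H2 N) (U : H2 N) : Prop where
  u : WConv (fun n => (v n).uL) U.uL
  g : ∀ i, WConv (fun n => (v n).gL i) (U.gL i)
  l : WConv (fun n => (v n).lL) U.lL

lemma WH2.comp {v : ℕ → H2 N} {U : H2 N} (h : WH2 v U) {φ : ℕ → ℕ} (hφ : StrictMono φ) :
    WH2 (fun n => v (φ n)) U := ⟨h.u.comp hφ, fun i => (h.g i).comp hφ, h.l.comp hφ⟩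

lemma H2_weak_compact (v : ℕ → H2 N) (R : ℝ) (h1 : ∀ n, (v n).massSq ≤ R)
    (h2 : ∀ n, (v n).gradSq ≤ R) (h3 : ∀ n, (v n).lapSq ≤ R) :
    ∃ φ : ℕ → ℕ, StrictMono φ ∧ ∃ U : H2 N, WH2 (fun n => v (φ n)) U := by
  let F : Option (Option (Fin N)) → ℕ → L2c N := fun o n => match o with
    | none => (v n).uL
    | some none => (v n).lL
    | some (some i) => (v n).gL i
  have hF : ∀ o n, ‖F o n‖ ≤ √R := by
    intro o n
    apply Real.le_sqrt_of_sq_le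
    match o with
    | none => exact (v n).massSq_norm ▸ h1 n
    | some none => exact (v n).lapSq_norm ▸ h3 n
    | some (some i) =>
      refine le_trans ?_ (h2 n)
      rw [H2.gradSq_norm]
      exact Finset.single_le_sum (f := fun i => ‖(v n).gL i‖ ^ 2) (fun i _ => by positivity)
        (Finset.mem_univ i)
  obtain ⟨φ, hφ, h⟩ := weak_seq_fin F √R hF Finset.univ
  obtain ⟨g0, hg0⟩ := h none (Finset.mem_univ _)
  obtain ⟨gl, hgl⟩ := h (some none) (Finset.mem_univ _)
  have hgg : ∀ i, ∃ g, WConv (fun n => (v (φ n)).gL i) g := fun i =>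
    h (some (some i)) (Finset.mem_univ _)
  choose gg hgg using hgg
  replace hg0 : WConv (fun n => (v (φ n)).uL) g0 := hg0
  replace hgl : WConv (fun n => (v (φ n)).lL) gl := hgl
  let U : H2 N :=
    { u := g0
      grad := fun i => gg i
      lapl := gl
      u_mem := Lp.memLp g0
      grad_mem := fun i => Lp.memLp (gg i)
      lapl_mem := Lp.memLp gl
      grad_spec := by
        intro i φ' hφ'
        have a1 := WConv.pair (fun n => (v (φ n)).u_mem) hg0 (hφ'.pderiv i).memLp
        have a2 := (WConv.pair (fun n => (v (φ n)).grad_mem i) (hgg i) hφ'.memLp).neg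
        refine tendsto_nhds_unique a1 (a2.congr fun n => ?_)
        exact ((v (φ n)).grad_spec i φ' hφ').symm
      lapl_spec := by
        intro φ' hφ'
        have a1 := WConv.pair (fun n => (v (φ n)).u_mem) hg0 hφ'.lap.memLp
        have a2 := WConv.pair (fun n => (v (φ n)).lapl_mem) hgl hφ'.memLp
        refine tendsto_nhds_unique a1 (a2.congr fun n => ?_)
        exact ((v (φ n)).lapl_spec φ' hφ').symm }
  have e0 : U.uL = g0 := Lp.toLp_coeFn _ _
  have e1 : ∀ i, U.gL i = gg i := fun i => Lp.toLp_coeFn _ _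
  have e2 : U.lL = gl := Lp.toLp_coeFn _ _
  exact ⟨φ, hφ, U, e0 ▸ hg0, fun i => (e1 i) ▸ hgg i, e2 ▸ hgl⟩

lemma WConv.split {f : ℕ → L2c N} {g : L2c N} (h : WConv f g) :
    Tendsto (fun n => ‖f n‖ ^ 2 - ‖f n - g‖ ^ 2) atTop (𝓝 (‖g‖ ^ 2)) := by
  have h1 := (RCLike.continuous_re (K := ℂ)).tendsto _ |>.comp (h g)
  have h2 : RCLike.re (inner ℂ g g) = ‖g‖ ^ 2 := (norm_sq_eq_re_inner (𝕜 := ℂ) g).symm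
  rw [h2] at h1
  have h3 := (h1.const_mul 2).sub_const (‖g‖ ^ 2)
  rw [show 2 * ‖g‖ ^ 2 - ‖g‖ ^ 2 = ‖g‖ ^ 2 by ring] at h3
  refine h3.congr fun n => ?_
  rw [norm_sub_sq (𝕜 := ℂ) (f n) g, inner_re_symm (𝕜 := ℂ) (f n) g]
  simp only [Function.comp]
  ring

lemma H2.sub_uL (U V : H2 N) : (U.sub V).uL = U.uL - V.uL := MemLp.toLp_sub U.u_mem V.u_mem
lemma H2.sub_gL (U V : H2 N) (i : Fin N) : (U.sub V).gL i = U.gL i - V.gL i :=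
  MemLp.toLp_sub (U.grad_mem i) (V.grad_mem i)
lemma H2.sub_lL (U V : H2 N) : (U.sub V).lL = U.lL - V.lL := MemLp.toLp_sub U.lapl_mem V.lapl_mem

lemma WH2.mass {v : ℕ → H2 N} {U : H2 N} (h : WH2 v U) :
    Tendsto (fun n => (v n).massSq - ((v n).sub U).massSq) atTop (𝓝 U.massSq) := by
  simp only [H2.massSq_norm, H2.sub_uL]; exact h.u.split
lemma WH2.lap {v : ℕ → H2 N} {U : H2 N} (h : WH2 v U) :
    Tendsto (fun n => (v n).lapSq - ((v n).sub U).lapSq) atTop (𝓝 U.lapSq) := by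
  simp only [H2.lapSq_norm, H2.sub_lL]; exact h.l.split
lemma WH2.grad {v : ℕ → H2 N} {U : H2 N} (h : WH2 v U) :
    Tendsto (fun n => (v n).gradSq - ((v n).sub U).gradSq) atTop (𝓝 U.gradSq) := by
  simp only [H2.gradSq_norm, H2.sub_gL, ← Finset.sum_sub_distrib]
  exact tendsto_finsetSum _ fun i _ => (h.g i).split

lemma WConv.low {f : ℕ → L2c N} {g : L2c N} (h : WConv f g) (A : ℝ) (x : Esp N) :
    Tendsto (fun n => lowF A (f n) x) atTop (𝓝 (lowF A g x)) := by
  have h1 := h (𝓕⁻ (kerL A x) : L2c N)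
  have h2 : ∀ f : L2c N, inner ℂ (𝓕⁻ (kerL A x) : L2c N) f = lowF A f x := by
    intro f
    rw [lowF, ← Lp.inner_fourier_eq, FourierTransform.fourier_fourierInv_eq]
  simpa only [h2] using h1

end Part8

section Part9
open FourierTransform SchwartzMap LineDeriv
open scoped SchwartzMap
variable {N : ℕ}

/-- An integrable weight. -/
def wgt (x : Esp N) : ENNReal := ENNReal.ofReal ((1 + ‖x‖) ^ (-((N:ℝ) + 1)))

lemma wgt_meas : Measurable (wgt (N := N)) := by
  unfold wgt
  fun_prop

lemma wgt_le (x : Esp N) : wgt x ≤ 1 := by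
  rw [wgt, ENNReal.ofReal_le_one]
  refine Real.rpow_le_one_of_one_le_of_nonpos ?_ ?_
  · linarith [norm_nonneg x]
  · linarith [(Nat.cast_nonneg N : (0:ℝ) ≤ N)]

lemma wgt_pos (x : Esp N) : wgt x ≠ 0 := by
  rw [wgt, ENNReal.ofReal_ne_zero_iff]
  positivity

lemma wgt_int : ∫⁻ x : Esp N, wgt x ≠ ⊤ := by
  have h : Integrable (fun x : Esp N => (1 + ‖x‖) ^ (-((N:ℝ) + 1))) volume :=
    integrable_one_add_norm (by simp)
  have := h.2
  rw [hasFiniteIntegral_iff_ofReal (Eventually.of_forall fun x => by positivity)] at this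
  exact this.ne

lemma low_wgt {f : ℕ → L2c N} (hf : WConv f 0) {R : ℝ} (hR : ∀ n, ‖f n‖ ≤ R) (A : ℝ) :
    Tendsto (fun n => ∫⁻ x, ENNReal.ofReal (‖lowF A (f n) x‖ ^ 2) * wgt x) atTop (𝓝 0) := by
  set V := (√(volume (Metric.ball (0 : Esp N) A)).toReal * R) ^ 2
  have h0 : ∀ x, lowF A (0 : L2c N) x = 0 := by
    intro x
    have := lowF_norm_le A (0 : L2c N) x
    simpa using this
  have := tendsto_lintegral_of_dominated_convergence (μ := (volume : Measure (Esp N)))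
    (F := fun n x => ENNReal.ofReal (‖lowF A (f n) x‖ ^ 2) * wgt x) (f := fun _ => 0)
    (fun x => ENNReal.ofReal V * wgt x)
    (fun n => by
      have hc := lowF_continuous A (f n)
      exact ((hc.norm.pow 2).measurable.ennreal_ofReal).mul wgt_meas)
    (fun n => Eventually.of_forall fun x => by
      have h1 := lowF_norm_le A (f n) x
      have h2 : ‖lowF A (f n) x‖ ≤ √(volume (Metric.ball (0 : Esp N) A)).toReal * R :=
        h1.trans (by gcongr; exact hR n)
      refine mul_le_mul' (ENNReal.ofReal_le_ofReal ?_) le_rfl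
      exact pow_le_pow_left₀ (norm_nonneg _) h2 2)
    (by
      rw [lintegral_const_mul' _ _ ENNReal.ofReal_ne_top]
      exact ENNReal.mul_ne_top ENNReal.ofReal_ne_top wgt_int)
    (Eventually.of_forall fun x => by
      have h1 := hf.low A x
      rw [h0] at h1
      have h2 : Tendsto (fun n => ENNReal.ofReal (‖lowF A (f n) x‖ ^ 2)) atTop (𝓝 0) := by
        have := ENNReal.tendsto_ofReal ((h1.norm).pow 2)
        simpa using this
      have h3 := ENNReal.Tendsto.mul_const h2 (b := wgt x) (Or.inr ((wgt_le x).trans_lt ENNReal.one_lt_top).ne)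
      simpa using h3)
  simpa using this

lemma ofReal_sq_add_le (a b : ℂ) : ENNReal.ofReal (‖a + b‖ ^ 2) ≤
    2 * ENNReal.ofReal (‖a‖ ^ 2) + 2 * ENNReal.ofReal (‖b‖ ^ 2) := by
  have h2 : (2 : ENNReal) = ENNReal.ofReal 2 := by norm_num
  rw [h2, ← ENNReal.ofReal_mul (by norm_num), ← ENNReal.ofReal_mul (by norm_num),
    ← ENNReal.ofReal_add (by positivity) (by positivity)]
  refine ENNReal.ofReal_le_ofReal ?_
  have := norm_add_le a b
  nlinarith [norm_nonneg a, norm_nonneg b, norm_nonneg (a + b), sq_nonneg (‖a‖ - ‖b‖)]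

lemma f_wgt {f : ℕ → L2c N} (hf : WConv f 0) {R L : ℝ} (hR : ∀ n, ‖f n‖ ≤ R)
    (hL : ∀ n A, 0 < A → ‖hiL A (f n)‖ ^ 2 ≤ L / (4 * Real.pi ^ 2 * A ^ 2) ^ 2) :
    Tendsto (fun n => ∫⁻ x, ENNReal.ofReal (‖f n x‖ ^ 2) * wgt x) atTop (𝓝 0) := by
  have hbd : ∀ A, 0 < A → ∀ n, ∫⁻ x, ENNReal.ofReal (‖f n x‖ ^ 2) * wgt x ≤
      2 * (∫⁻ x, ENNReal.ofReal (‖lowF A (f n) x‖ ^ 2) * wgt x) +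
      2 * ENNReal.ofReal (L / (4 * Real.pi ^ 2 * A ^ 2) ^ 2) := by
    intro A hA n
    have hmeas : Measurable fun x => ENNReal.ofReal (‖lowF A (f n) x‖ ^ 2) * wgt x :=
      (((lowF_continuous A (f n)).norm.pow 2).measurable.ennreal_ofReal).mul wgt_meas
    calc ∫⁻ x, ENNReal.ofReal (‖f n x‖ ^ 2) * wgt x
        ≤ ∫⁻ x, 2 * (ENNReal.ofReal (‖lowF A (f n) x‖ ^ 2) * wgt x) +
            2 * ENNReal.ofReal (‖hiL A (f n) x‖ ^ 2) := by
          refine lintegral_mono_ae ?_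
          filter_upwards [low_hi A (f n)] with x hx
          calc ENNReal.ofReal (‖f n x‖ ^ 2) * wgt x
              ≤ (2 * ENNReal.ofReal (‖lowF A (f n) x‖ ^ 2) +
                2 * ENNReal.ofReal (‖hiL A (f n) x‖ ^ 2)) * wgt x := by
                rw [hx]; gcongr; exact ofReal_sq_add_le _ _
            _ = 2 * (ENNReal.ofReal (‖lowF A (f n) x‖ ^ 2) * wgt x) +
                2 * ENNReal.ofReal (‖hiL A (f n) x‖ ^ 2) * wgt x := by ring
            _ ≤ _ := by
                refine add_le_add le_rfl ?_
                exact mul_le_of_le_one_right' (wgt_le x)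
      _ = 2 * (∫⁻ x, ENNReal.ofReal (‖lowF A (f n) x‖ ^ 2) * wgt x) +
            2 * ∫⁻ x, ENNReal.ofReal (‖hiL A (f n) x‖ ^ 2) := by
          rw [lintegral_add_left (hmeas.const_mul 2), lintegral_const_mul' _ _ (by norm_num),
            lintegral_const_mul' _ _ (by norm_num)]
      _ ≤ _ := by
          rw [L2_lsq]
          gcongr
          exact hL n A hA
  have hten : Tendsto (fun A : ℝ => 2 * ENNReal.ofReal (L / (4 * Real.pi ^ 2 * A ^ 2) ^ 2)) atTop (𝓝 0) := by
    have h1 : Tendsto (fun A : ℝ => L / (4 * Real.pi ^ 2 * A ^ 2) ^ 2) atTop (𝓝 0) := by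
      simpa using tendsto_hi one_pos 1 L 1
    have h2 := ENNReal.Tendsto.const_mul (a := 2) (ENNReal.tendsto_ofReal h1) (Or.inr (by norm_num))
    simpa using h2
  rw [ENNReal.tendsto_nhds_zero]
  intro η hη
  rcases eq_or_ne η ⊤ with rfl | hηt
  · simp
  have hη2 : 0 < η / 2 := ENNReal.half_pos hη.ne'
  obtain ⟨A, hA1, hA⟩ := ((hten.eventually_le_const hη2).and (eventually_gt_atTop 0)).exists
  have h3 := ENNReal.Tendsto.const_mul (a := 2) (low_wgt hf hR A) (Or.inr (by norm_num))
  rw [mul_zero] at h3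
  filter_upwards [h3.eventually_le_const hη2] with n hn
  calc _ ≤ _ := hbd A hA n
    _ ≤ η / 2 + η / 2 := add_le_add hn hA1
    _ = η := ENNReal.add_halves η

lemma WH2.sub_conv {v : ℕ → H2 N} {U : H2 N} (h : WH2 v U) :
    WConv (fun n => ((v n).sub U).uL) 0 := by
  intro k
  simp only [H2.sub_uL, inner_sub_right, inner_zero_right]
  simpa using (h.u k).sub_const (inner ℂ k U.uL)

lemma ae_subseq {v : ℕ → H2 N} {U : H2 N} (h : WH2 v U) {R L : ℝ}
    (hR : ∀ n, ((v n).sub U).massSq ≤ R) (hL : ∀ n, ((v n).sub U).lapSq ≤ L) :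
    ∃ φ : ℕ → ℕ, StrictMono φ ∧
      ∀ᵐ x, Tendsto (fun n => ((v (φ n)).sub U).u x) atTop (𝓝 0) := by
  have h1 := f_wgt h.sub_conv (R := √R) (L := L) (fun n => Real.le_sqrt_of_sq_le
    (((v n).sub U).massSq_norm ▸ hR n)) (fun n A hA => (((v n).sub U).hi_mass hA).trans
      (by gcongr; exact hL n))
  set ν := (volume : Measure (Esp N)).withDensity wgt with hν
  have hac : (volume : Measure (Esp N)) ≪ ν :=
    withDensity_absolutelyContinuous' wgt_meas.aemeasurable (Eventually.of_forall wgt_pos)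
  have hac' : ν ≪ volume := withDensity_absolutelyContinuous _ _
  have h2 : Tendsto (fun n => eLpNorm ((((v n).sub U).uL : Esp N → ℂ) - 0) 2 ν) atTop (𝓝 0) := by
    have h3 : ∀ n, eLpNorm ((((v n).sub U).uL : Esp N → ℂ) - 0) 2 ν =
        (∫⁻ x, ENNReal.ofReal (‖((v n).sub U).uL x‖ ^ 2) * wgt x) ^ (1 / 2 : ℝ) := by
      intro n
      rw [eLpNorm_eq_lintegral_rpow_enorm_toReal (by norm_num) (by norm_num), hν,
        lintegral_withDensity_eq_lintegral_mul_non_measurable₀ _ wgt_meas.aemeasurable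
          (Eventually.of_forall fun x => (wgt_le x).trans_lt ENNReal.one_lt_top)]
      simp only [ENNReal.toReal_ofNat]
      congr 1
      refine lintegral_congr fun x => ?_
      simp only [Pi.mul_apply, Pi.sub_apply, Pi.zero_apply, sub_zero]
      rw [mul_comm]
      congr 1
      rw [← ofReal_norm, ENNReal.ofReal_rpow_of_nonneg (norm_nonneg _) (by norm_num),
        Real.rpow_two]
    simp_rw [h3]
    have h4 := (ENNReal.continuous_rpow_const (y := (1/2:ℝ))).tendsto 0 |>.comp h1
    rw [ENNReal.zero_rpow_of_pos (by norm_num)] at h4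
    exact h4
  have h3 : TendstoInMeasure ν (fun n => (((v n).sub U).uL : Esp N → ℂ)) atTop (0 : Esp N → ℂ) :=
    tendstoInMeasure_of_tendsto_eLpNorm (by norm_num)
      (fun n => (Lp.aestronglyMeasurable _).mono_ac hac') aestronglyMeasurable_zero h2
  obtain ⟨φ, hφ, h4⟩ := h3.exists_seq_tendsto_ae
  refine ⟨φ, hφ, ?_⟩
  have h5 : ∀ᵐ x, ∀ n, ((v (φ n)).sub U).uL x = ((v (φ n)).sub U).u x :=
    ae_all_iff.2 fun n => MemLp.coeFn_toLp _
  filter_upwards [hac.ae_le h4, h5] with x hx h5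
  simpa only [h5, Pi.zero_apply] using hx

end Part9

section Part10
open FourierTransform SchwartzMap LineDeriv
open scoped SchwartzMap
variable {N : ℕ}

lemma BL_point {p ε : ℝ} (hp : 0 < p) (hε : 0 < ε) : ∃ C : ℝ, 0 ≤ C ∧ ∀ a b : ℝ, 0 ≤ a → 0 ≤ b →
    (a + b) ^ p ≤ (1 + ε) * b ^ p + C * a ^ p := by
  have hc : Tendsto (fun η : ℝ => (1 + η) ^ p) (𝓝[>] 0) (𝓝 ((1 + 0) ^ p)) :=
    Tendsto.mono_left (((continuous_const.add continuous_id).tendsto (0:ℝ)).rpow_const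
      (Or.inr hp.le)) nhdsWithin_le_nhds
  rw [add_zero, Real.one_rpow] at hc
  obtain ⟨η, h1, h2⟩ := ((hc.eventually_lt_const (show (1:ℝ) < 1 + ε by linarith)).and
    self_mem_nhdsWithin).exists
  have hη : 0 < η := h2
  refine ⟨(1 + 1 / η) ^ p, by positivity, fun a b ha hb => ?_⟩
  rcases le_total a (η * b) with h | h
  · have : (a + b) ^ p ≤ (1 + ε) * b ^ p := by
      calc (a + b) ^ p ≤ ((1 + η) * b) ^ p := by
            apply Real.rpow_le_rpow (by positivity) _ hp.le; linarith
        _ = (1 + η) ^ p * b ^ p := Real.mul_rpow (by positivity) hb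
        _ ≤ _ := by gcongr
    have h3 : 0 ≤ (1 + 1 / η) ^ p * a ^ p := by positivity
    linarith
  · have : (a + b) ^ p ≤ (1 + 1 / η) ^ p * a ^ p := by
      rw [← Real.mul_rpow (by positivity) ha]
      apply Real.rpow_le_rpow (by positivity) _ hp.le
      have : b ≤ a / η := by rw [le_div_iff₀ hη]; linarith
      calc a + b ≤ a + a / η := by linarith
        _ = _ := by ring
    have h3 : 0 ≤ (1 + ε) * b ^ p := by positivity
    linarith

lemma brezis_lieb {σ : ℝ} (hσ : 0 < σ)
    (hI : ∀ U : H2 N, Integrable (fun x => ‖U.u x‖ ^ (2 * σ + 2)) volume)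
    {v : ℕ → H2 N} {U : H2 N} {R : ℝ} (hR : ∀ n, ((v n).sub U).pPow σ ≤ R)
    (hae : ∀ᵐ x, Tendsto (fun n => ((v n).sub U).u x) atTop (𝓝 0)) {ε : ℝ} (hε : 0 < ε) :
    ∀ᶠ n in atTop, (v n).pPow σ ≤ U.pPow σ + ((v n).sub U).pPow σ + ε := by
  set p := 2 * σ + 2 with hpdef
  have hp : 0 < p := by positivity
  have hR0 : 0 ≤ R := (((v 0).sub U).pPow_nonneg σ).trans (hR 0)
  set e := ε / 2 / (R + 1) with he
  have hepos : 0 < e := by positivity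
  obtain ⟨C, hC, hpt⟩ := BL_point hp hepos
  have hpt' : ∀ n x, ‖(v n).u x‖ ^ p ≤ (1 + e) * ‖((v n).sub U).u x‖ ^ p + C * ‖U.u x‖ ^ p := by
    intro n x
    refine le_trans (Real.rpow_le_rpow (norm_nonneg _) ?_ hp.le) (hpt _ _ (norm_nonneg _) (norm_nonneg _))
    have := norm_add_le (U.u x) (((v n).sub U).u x)
    simpa [H2.sub] using this
  have hG : ∀ n, Integrable (fun x => ‖(v n).u x‖ ^ p - ‖U.u x‖ ^ p -
      (1 + e) * ‖((v n).sub U).u x‖ ^ p) volume := fun n =>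
    ((hI (v n)).sub (hI U)).sub ((hI ((v n).sub U)).const_mul _)
  set φ : ℕ → Esp N → ℝ := fun n x => max (‖(v n).u x‖ ^ p - ‖U.u x‖ ^ p -
      (1 + e) * ‖((v n).sub U).u x‖ ^ p) 0 with hφ
  have hφi : ∀ n, Integrable (φ n) volume := fun n => (hG n).pos_part
  have hlim : Tendsto (fun n => ∫ x, φ n x) atTop (𝓝 (∫ _ : Esp N, (0:ℝ))) := by
    refine tendsto_integral_of_dominated_convergence (fun x => C * ‖U.u x‖ ^ p)
      (fun n => (hφi n).1) ((hI U).const_mul C) (fun n => Eventually.of_forall fun x => ?_) ?_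
    · have h1 := hpt' n x
      have h2 : 0 ≤ ‖U.u x‖ ^ p := by positivity
      have h3 : 0 ≤ C * ‖U.u x‖ ^ p := by positivity
      rw [Real.norm_of_nonneg (le_max_right _ _)]
      refine max_le ?_ h3
      linarith
    · filter_upwards [hae] with x hx
      have h1 : Tendsto (fun n => ‖((v n).sub U).u x‖ ^ p) atTop (𝓝 0) := by
        have := (hx.norm).rpow_const (p := p) (Or.inr hp.le)
        simpa [Real.zero_rpow hp.ne'] using this
      have h2 : Tendsto (fun n => ‖(v n).u x‖ ^ p) atTop (𝓝 (‖U.u x‖ ^ p)) := by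
        have := ((hx.add_const (U.u x)).norm).rpow_const (p := p) (Or.inr hp.le)
        simpa [H2.sub] using this
      have h3 := ((h2.sub_const (‖U.u x‖ ^ p)).sub (h1.const_mul (1 + e))).max
        (tendsto_const_nhds (x := (0:ℝ)))
      simpa using h3
  rw [integral_zero] at hlim
  filter_upwards [hlim.eventually_lt_const (half_pos hε)] with n hn
  have h1 : ∫ x, (‖(v n).u x‖ ^ p - ‖U.u x‖ ^ p - (1 + e) * ‖((v n).sub U).u x‖ ^ p) ≤
      ∫ x, φ n x := integral_mono (hG n) (hφi n) fun x => le_max_left _ _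
  rw [integral_sub (f := fun x => ‖(v n).u x‖ ^ p - ‖U.u x‖ ^ p) ((hI (v n)).sub (hI U)) ((hI ((v n).sub U)).const_mul _),
    integral_sub (hI (v n)) (hI U), integral_const_mul] at h1
  change (v n).pPow σ - U.pPow σ - (1 + e) * ((v n).sub U).pPow σ ≤ _ at h1
  have h2 : e * ((v n).sub U).pPow σ ≤ ε / 2 := by
    calc e * ((v n).sub U).pPow σ ≤ e * (R + 1) := by gcongr; linarith [hR n]
      _ = ε / 2 := by rw [he]; field_simp
  linarith

end Part10

section Part11
open FourierTransform SchwartzMap LineDeriv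
open scoped SchwartzMap
variable {N : ℕ}

lemma nsub_le (f g : L2c N) : ‖f - g‖ ^ 2 ≤ 2 * ‖f‖ ^ 2 + 2 * ‖g‖ ^ 2 := by
  have := norm_sub_le f g
  nlinarith [norm_nonneg f, norm_nonneg g, norm_nonneg (f - g), sq_nonneg (‖f‖ - ‖g‖)]

lemma H2.sub_mass_le (U V : H2 N) : (U.sub V).massSq ≤ 2 * U.massSq + 2 * V.massSq := by
  simp only [H2.massSq_norm, H2.sub_uL]; exact nsub_le _ _
lemma H2.sub_lap_le (U V : H2 N) : (U.sub V).lapSq ≤ 2 * U.lapSq + 2 * V.lapSq := by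
  simp only [H2.lapSq_norm, H2.sub_lL]; exact nsub_le _ _

lemma H2.pPow_pos {σ : ℝ} (hσ : 0 < σ)
    (hI : ∀ U : H2 N, Integrable (fun x => ‖U.u x‖ ^ (2 * σ + 2)) volume) (U : H2 N)
    (hU : 0 < U.massSq) : 0 < U.pPow σ := by
  refine lt_of_le_of_ne (U.pPow_nonneg σ) fun h => ?_
  have h1 := (integral_eq_zero_iff_of_nonneg (f := fun x => ‖U.u x‖ ^ (2 * σ + 2))
    (fun x => by positivity) (hI U)).1 h.symm
  have : U.massSq = 0 := by
    rw [H2.massSq, integral_eq_zero_of_ae]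
    filter_upwards [h1] with x hx
    have h2 : ‖U.u x‖ = 0 := by
      by_contra hne
      have h3 : 0 < ‖U.u x‖ ^ (2 * σ + 2) :=
        Real.rpow_pos_of_pos (lt_of_le_of_ne (norm_nonneg _) (Ne.symm hne)) _
      exact h3.ne' hx
    simp [h2]
  exact hU.ne' this

lemma scaling_bound {σ : ℝ} (hσ : 0 < σ) {m e : ℝ} (hm : 0 < m)
    (hE : ∀ U : H2 N, U.massSq = m → e ≤ U.energy σ) (W : H2 N) (hW : 0 < W.massSq) :
    W.massSq / m * e + ((m / W.massSq) ^ σ - 1) * ((1 / (σ + 1)) * W.pPow σ) ≤ W.energy σ := by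
  set s := m / W.massSq with hs
  have hsp : 0 < s := by positivity
  obtain ⟨h1, h2⟩ := H2.rsmul_sqrt hσ hsp W
  have h3 := hE _ (by rw [h1, hs]; field_simp)
  rw [h2, Real.rpow_add_one hsp.ne'] at h3
  have h4 : W.massSq / m = s⁻¹ := by rw [hs]; field_simp
  rw [h4, H2.energy]
  have h5 := mul_le_mul_of_nonneg_left h3 (inv_pos.2 hsp).le
  have h6 : s⁻¹ * (s * (W.lapSq - 2 * W.gradSq) - s ^ σ * s * (1 / (σ + 1) * W.pPow σ)) =
      (W.lapSq - 2 * W.gradSq) - s ^ σ * (1 / (σ + 1) * W.pPow σ) := by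
    field_simp
  linarith

/-- The core dichotomy argument, for a weakly and a.e. convergent minimizing sequence. -/
lemma profile (hN : 1 ≤ N) {σ : ℝ} (hσ : 0 < σ) (h4 : (N : ℝ) * σ ≤ 4) {m e : ℝ} (hm : 0 < m)
    (hE : ∀ U : H2 N, U.massSq = m → e ≤ U.energy σ)
    {w : ℕ → H2 N} {U : H2 N} (hw : WH2 w U) {M L : ℝ} (hM : ∀ n, (w n).massSq ≤ M)
    (hL : ∀ n, (w n).lapSq ≤ L)
    (hae : ∀ᵐ x, Tendsto (fun n => ((w n).sub U).u x) atTop (𝓝 0))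
    (hmass : Tendsto (fun n => (w n).massSq) atTop (𝓝 m))
    (hen : Tendsto (fun n => (w n).energy σ) atTop (𝓝 e)) (hU : 0 < U.massSq) :
    U.massSq = m ∧ U.energy σ = e ∧ Tendsto (fun n => ((w n).sub U).massSq) atTop (𝓝 0) ∧
      Tendsto (fun n => ((w n).sub U).gradSq) atTop (𝓝 0) ∧
      Tendsto (fun n => ((w n).sub U).lapSq) atTop (𝓝 0) := by
  obtain ⟨C, hC, hGN⟩ := GN_ineq hN hσ
  have hNpos : (0:ℝ) < N := by exact_mod_cast hN
  obtain ⟨c, K, hW⟩ := Wt_any (by positivity) h4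
  have hc := hW.1
  have hK := hW.2.1
  have hI : ∀ U : H2 N, Integrable (fun x => ‖U.u x‖ ^ (2 * σ + 2)) volume := fun U =>
    (U.pPow_bound hσ hC hGN hW).1
  set r : ℕ → H2 N := fun n => (w n).sub U with hr
  set M2 := 2 * M + 2 * U.massSq with hM2
  set L2 := 2 * L + 2 * U.lapSq with hL2
  have hrM : ∀ n, (r n).massSq ≤ M2 := fun n => ((w n).sub_mass_le U).trans (by linarith [hM n])
  have hrL : ∀ n, (r n).lapSq ≤ L2 := fun n => ((w n).sub_lap_le U).trans (by linarith [hL n])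
  have hM2n : 0 ≤ M2 := (r 0).massSq_nonneg.trans (hrM 0)
  have hL2n : 0 ≤ L2 := (r 0).lapSq_nonneg.trans (hrL 0)
  have hrP : ∀ n, (r n).pPow σ ≤ C * (r n).massSq ^ σ * (c * L2 + K * M2) := by
    intro n
    have hn := (r n).massSq_nonneg
    refine ((r n).pPow_bound hσ hC hGN hW).2.trans ?_
    gcongr
    · exact hrL n
    · exact hrM n
  have hrP2 : ∀ n, (r n).pPow σ ≤ C * M2 ^ σ * (c * L2 + K * M2) := by
    intro n
    have hn := (r n).massSq_nonneg
    refine (hrP n).trans ?_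
    gcongr
    exact hrM n
  have hs1 : 0 < 1 / (σ + 1) := by positivity
  have hrm : Tendsto (fun n => (r n).massSq) atTop (𝓝 (m - U.massSq)) := by
    refine (hmass.sub hw.mass).congr fun n => ?_
    ring
  have hle : U.massSq ≤ m := by
    have := ge_of_tendsto' hrm (fun n => (r n).massSq_nonneg)
    linarith
  have hD : Tendsto (fun n => ((w n).lapSq - (r n).lapSq) - 2 * ((w n).gradSq - (r n).gradSq))
      atTop (𝓝 (U.lapSq - 2 * U.gradSq)) := hw.lap.sub (hw.grad.const_mul 2)
  have hsplit : ∀ ε : ℝ, 0 < ε → ∀ᶠ n in atTop,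
      U.energy σ + (r n).energy σ - ε ≤ (w n).energy σ := by
    intro ε hε
    filter_upwards [brezis_lieb hσ hI hrP2 hae (show 0 < (σ + 1) * (ε / 2) by positivity),
      hD.eventually_const_lt (show U.lapSq - 2 * U.gradSq - ε / 2 < _ by linarith)] with n h1 h2
    have h3 := mul_le_mul_of_nonneg_left h1 hs1.le
    have h5 : 1 / (σ + 1) * (U.pPow σ + (r n).pPow σ + (σ + 1) * (ε / 2)) =
      1 / (σ + 1) * U.pPow σ + 1 / (σ + 1) * (r n).pPow σ + ε / 2 := by field_simp
    have h3' : 1 / (σ + 1) * (w n).pPow σ ≤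
      1 / (σ + 1) * U.pPow σ + 1 / (σ + 1) * (r n).pPow σ + ε / 2 := h3.trans_eq h5
    simp only [H2.energy]
    linarith
  have hUm : U.massSq = m := by
    by_contra hne
    have hlt : U.massSq < m := lt_of_le_of_ne hle hne
    have hcU := scaling_bound hσ hm hE U hU
    set cc := ((m / U.massSq) ^ σ - 1) * ((1 / (σ + 1)) * U.pPow σ) with hcc
    have hccp : 0 < cc := by
      refine mul_pos (sub_pos.2 (Real.one_lt_rpow ?_ hσ)) (mul_pos hs1 (U.pPow_pos hσ hI hU))
      rwa [one_lt_div hU]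
    have hev : ∀ᶠ n in atTop, U.energy σ + (r n).massSq / m * e - cc / 2 ≤ (w n).energy σ := by
      filter_upwards [hsplit (cc / 2) (by positivity),
        hrm.eventually_const_lt (show 0 < m - U.massSq by linarith),
        hrm.eventually_lt_const (show m - U.massSq < m by linarith)] with n h1 h2 h3
      have h5 := scaling_bound hσ hm hE (r n) h2
      have h6 : 0 ≤ ((m / (r n).massSq) ^ σ - 1) * ((1 / (σ + 1)) * (r n).pPow σ) := by
        refine mul_nonneg (sub_nonneg.2 (Real.one_le_rpow ?_ hσ.le))
          (mul_nonneg hs1.le ((r n).pPow_nonneg σ))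
        rw [one_le_div h2]; exact h3.le
      linarith
    have hlim := (((hrm.div_const m).mul_const e).const_add (U.energy σ)).sub_const (cc / 2)
    have h7 := le_of_tendsto_of_tendsto hlim hen hev
    have h8 : (m - U.massSq) / m * e = e - U.massSq / m * e := by field_simp
    linarith
  have hr0 : Tendsto (fun n => (r n).massSq) atTop (𝓝 0) := by
    rw [hUm, sub_self] at hrm; exact hrm
  have hP0 : Tendsto (fun n => (r n).pPow σ) atTop (𝓝 0) := by
    refine squeeze_zero (fun n => (r n).pPow_nonneg σ) hrP ?_
    have := hr0.rpow_const (p := σ) (Or.inr hσ.le)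
    rw [Real.zero_rpow hσ.ne'] at this
    simpa using (this.const_mul C).mul_const (c * L2 + K * M2)
  have hg0 : Tendsto (fun n => (r n).gradSq) atTop (𝓝 0) := by
    rw [Metric.tendsto_nhds]
    intro ε hε
    have ha : 0 < ε / (L2 + 1) := by positivity
    have h1 := hr0.const_mul (ε / (L2 + 1))⁻¹
    rw [mul_zero] at h1
    filter_upwards [h1.eventually_lt_const hε] with n hn
    rw [Real.dist_eq, sub_zero, abs_of_nonneg (r n).gradSq_nonneg]
    have h2 := (r n).gradSq_le ha
    have h3 : ε / (L2 + 1) * (r n).lapSq ≤ ε := by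
      calc ε / (L2 + 1) * (r n).lapSq ≤ ε / (L2 + 1) * (L2 + 1) := by gcongr; linarith [hrL n]
        _ = ε := by field_simp
    linarith
  have hUe : e ≤ U.energy σ := hE U hUm
  have hz : Tendsto (fun n => (w n).energy σ - e + 2 * (r n).gradSq + 1 / (σ + 1) * (r n).pPow σ)
      atTop (𝓝 0) := by
    have := ((hen.sub_const e).add (hg0.const_mul 2)).add (hP0.const_mul (1 / (σ + 1)))
    simpa using this
  refine ⟨hUm, le_antisymm ?_ hUe, hr0, hg0, ?_⟩
  · refine le_of_forall_pos_le_add fun ε hε => ?_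
    have hev : ∀ᶠ _n : ℕ in atTop, U.energy σ ≤ e + ε := by
      filter_upwards [hsplit (ε / 2) (by positivity), hz.eventually_lt_const (half_pos hε)]
        with n h1 h2
      have h3 : (r n).energy σ = (r n).lapSq - 2 * (r n).gradSq - 1 / (σ + 1) * (r n).pPow σ := rfl
      have := (r n).lapSq_nonneg
      linarith
    exact hev.exists.choose_spec
  · rw [Metric.tendsto_nhds]
    intro ε hε
    filter_upwards [hsplit (ε / 2) (by positivity), hz.eventually_lt_const (half_pos hε)]
      with n h1 h2
    have h3 : (r n).energy σ = (r n).lapSq - 2 * (r n).gradSq - 1 / (σ + 1) * (r n).pPow σ := rfl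
    rw [Real.dist_eq, sub_zero, abs_of_nonneg (r n).lapSq_nonneg]
    linarith

end Part11

section Part12
open FourierTransform SchwartzMap LineDeriv
open scoped SchwartzMap
variable {N : ℕ}

lemma eLp_tendsto {f : ℕ → Esp N → ℂ} (hf : ∀ n, MemLp (f n) 2 volume)
    (h : Tendsto (fun n => ∫ x, ‖f n x‖ ^ 2) atTop (𝓝 0)) :
    Tendsto (fun n => eLpNorm (f n) 2 volume) atTop (𝓝 0) := by
  have h1 : ∀ n, eLpNorm (f n) 2 volume = ENNReal.ofReal √(∫ x, ‖f n x‖ ^ 2) := by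
    intro n
    rw [toLp_sq (hf n), Real.sqrt_sq (norm_nonneg _), Lp.norm_toLp,
      ENNReal.ofReal_toReal (hf n).2.ne]
  simp_rw [h1]
  have h2 := ENNReal.tendsto_ofReal ((Real.continuous_sqrt.tendsto _).comp h)
  simpa using h2

lemma main_compact (hN : 1 ≤ N) {σ : ℝ} (hσ : 0 < σ) {m : ℝ} (hm : 0 < m)
    (hcase : (N : ℝ) * σ < 4 ∨ ((N : ℝ) * σ = 4 ∧ m < kstar N σ))
    (hem : EminE N σ m < ((-m : ℝ) : EReal)) (u : ℕ → H2 N)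
    (hu1 : Tendsto (fun n => (u n).massSq) atTop (nhds m))
    (hu2 : Tendsto (fun n => (((u n).energy σ : ℝ) : EReal)) atTop (nhds (EminE N σ m))) :
    ∃ (ψ : ℕ → ℕ) (xs : ℕ → Esp N) (U : H2 N), StrictMono ψ ∧
        H2TendstoTrans (fun k => u (ψ k)) xs U ∧
        U.massSq = m ∧ ((U.energy σ : ℝ) : EReal) = EminE N σ m := by
  have h4 : (N : ℝ) * σ ≤ 4 := by rcases hcase with h | h <;> linarith [h]
  obtain ⟨θ, K, M0, hθ0, hθ1, hK, hM0, hco⟩ := coercive hN hσ hm hcase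
  have hM0p : 0 < M0 := hm.trans hM0
  have ha : 0 < (1 - θ) / 2 := by linarith
  set a := (1 - θ) / 2 with hadef
  have hlow : ∀ U : H2 N, U.massSq ≤ M0 → a * U.lapSq ≤ U.energy σ + a⁻¹ * M0 + K := by
    intro U hU
    have h1 := hco U hU
    have h2 := U.gradSq_le ha
    have h3 : a⁻¹ * U.massSq ≤ a⁻¹ * M0 := by gcongr
    have h5 : θ = 1 - 2 * a := by rw [hadef]; ring
    rw [h5] at h1
    rw [H2.energy]
    linarith
  -- the infimum is a real number
  obtain ⟨e, he⟩ : ∃ e : ℝ, EminE N σ m = (e : EReal) := by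
    have h1 : EminE N σ m ≠ ⊤ := (hem.trans (EReal.coe_lt_top _)).ne
    have h2 : ((-(a⁻¹ * M0 + K) : ℝ) : EReal) ≤ EminE N σ m := by
      refine le_iInf fun U => le_iInf fun hU => ?_
      have := hlow U (hU.trans_le hM0.le)
      have h3 : 0 ≤ a * U.lapSq := mul_nonneg ha.le U.lapSq_nonneg
      exact_mod_cast (by linarith : -(a⁻¹ * M0 + K) ≤ U.energy σ)
    have h3 : EminE N σ m ≠ ⊥ := fun h => by
      rw [h] at h2
      exact (EReal.coe_ne_bot _) (le_bot_iff.1 h2)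
    exact ⟨_, (EReal.coe_toReal h1 h3).symm⟩
  have hE : ∀ U : H2 N, U.massSq = m → e ≤ U.energy σ := by
    intro U hU
    have : EminE N σ m ≤ ((U.energy σ : ℝ) : EReal) := iInf₂_le U hU
    rw [he] at this
    exact_mod_cast this
  rw [he] at hem hu2
  have hem' : e < -m := by exact_mod_cast hem
  have hu3 : Tendsto (fun n => (u n).energy σ) atTop (𝓝 e) := EReal.tendsto_coe.1 hu2
  rw [he]
  -- eventual bounds
  have hsum := hu3.add hu1
  obtain ⟨n0, hn0⟩ := eventually_atTop.1 ((hu1.eventually_lt_const hM0).and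
    ((hu3.eventually_lt_const (show e < e + 1 by linarith)).and
    (hsum.eventually_lt_const (show e + m < (e + m) / 2 by linarith))))
  set L := (e + 1 + a⁻¹ * M0 + K) / a with hLdef
  have hbL : ∀ n, n0 ≤ n → (u n).lapSq ≤ L := by
    intro n hn
    obtain ⟨h1, h2, -⟩ := hn0 n hn
    rw [hLdef, le_div_iff₀ ha]
    have := hlow (u n) h1.le
    linarith
  have hL0 : 0 ≤ L := (u n0).lapSq_nonneg.trans (hbL n0 le_rfl)
  have hbP : ∀ n, n0 ≤ n → (σ + 1) * (-(e + m) / 2) ≤ (u n).pPow σ := by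
    intro n hn
    obtain ⟨-, -, h3⟩ := hn0 n hn
    have h5 := (u n).gradSq_le one_pos
    rw [H2.energy] at h3
    have h6 : -(e + m) / 2 ≤ 1 / (σ + 1) * (u n).pPow σ := by
      rw [inv_one] at h5
      linarith
    calc (σ + 1) * (-(e + m) / 2) ≤ (σ + 1) * (1 / (σ + 1) * (u n).pPow σ) := by gcongr
      _ = _ := by field_simp
  have hδ : 0 < (σ + 1) * (-(e + m) / 2) := mul_pos (by linarith) (by linarith)
  obtain ⟨A, ε, hA, hε, hnv⟩ := nonvanishing hN hσ h4 hM0p.le hL0 hδ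
  have hx : ∀ n, ∃ x, ε ≤ ‖lowF A (u (n + n0)).uL x‖ := fun n =>
    hnv _ (hn0 _ (Nat.le_add_left _ _)).1.le (hbL _ (Nat.le_add_left _ _))
      (hbP _ (Nat.le_add_left _ _))
  choose x hx using hx
  set v : ℕ → H2 N := fun n => (u (n + n0)).shift (x n) with hv
  have hvM : ∀ n, (v n).massSq ≤ M0 := fun n => by
    rw [hv, H2.shift_massSq]; exact (hn0 _ (Nat.le_add_left _ _)).1.le
  have hvL : ∀ n, (v n).lapSq ≤ L := fun n => by
    rw [hv, H2.shift_lapSq]; exact hbL _ (Nat.le_add_left _ _)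
  have hvG : ∀ n, (v n).gradSq ≤ L + M0 := fun n => by
    have h5 := (v n).gradSq_le one_pos
    rw [inv_one] at h5
    linarith [hvM n, hvL n, (v n).gradSq_nonneg]
  obtain ⟨φ1, hφ1, U, hU⟩ := H2_weak_compact v (L + M0) (fun n => (hvM n).trans (by linarith)) hvG
    (fun n => (hvL n).trans (by linarith))
  have hUpos : 0 < U.massSq := by
    have h1 := (hU.u.low A 0).norm
    have h2 : ε ≤ ‖lowF A U.uL 0‖ := by
      refine ge_of_tendsto' h1 fun n => ?_
      have := lowF_translate (u (φ1 n + n0)).u_mem (x (φ1 n)) (v (φ1 n)).u_mem A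
      change ε ≤ ‖lowF A ((v (φ1 n)).u_mem.toLp _) 0‖
      rw [show (v (φ1 n)).u_mem.toLp (v (φ1 n)).u = (v (φ1 n)).u_mem.toLp
        (fun y => (u (φ1 n + n0)).u (y + x (φ1 n))) from rfl, this]
      exact hx (φ1 n)
    have h3 := lowF_norm_le A U.uL 0
    have h5 : ‖U.uL‖ ≠ 0 := by
      intro h0
      rw [h0, mul_zero] at h3
      linarith
    rw [U.massSq_norm]
    positivity
  obtain ⟨φ2, hφ2, hae⟩ := ae_subseq hU (R := 2 * M0 + 2 * U.massSq) (L := 2 * L + 2 * U.lapSq)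
    (fun n => ((v (φ1 n)).sub_mass_le U).trans (by linarith [hvM (φ1 n)]))
    (fun n => ((v (φ1 n)).sub_lap_le U).trans (by linarith [hvL (φ1 n)]))
  have hψ : StrictMono (fun k => φ1 (φ2 k) + n0) := fun i j hij =>
    Nat.add_lt_add_right (hφ1 (hφ2 hij)) n0
  obtain ⟨r1, r2, r3, r4, r5⟩ := profile hN hσ h4 hm hE (w := fun n => v (φ1 (φ2 n)))
    (hU.comp hφ2) (fun n => hvM _) (fun n => hvL _) hae
    ((hu1.comp hψ.tendsto_atTop).congr fun n => ((u _).shift_massSq _).symm)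
    ((hu3.comp hψ.tendsto_atTop).congr fun n => ((u _).shift_energy σ _).symm) hUpos
  refine ⟨fun k => φ1 (φ2 k) + n0, fun k => x (φ1 (φ2 k)), U, hψ, ⟨?_, fun i => ?_, ?_⟩, r1,
    by rw [r2]⟩
  · exact eLp_tendsto (fun n => ((v (φ1 (φ2 n))).sub U).u_mem) r3
  · refine eLp_tendsto (fun n => ((v (φ1 (φ2 n))).sub U).grad_mem i) ?_
    refine squeeze_zero (fun n => integral_nonneg fun _ => by positivity) (fun n => ?_) r4
    exact Finset.single_le_sum (f := fun i => ∫ x, ‖((v (φ1 (φ2 n))).sub U).grad i x‖ ^ 2)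
      (fun i _ => integral_nonneg fun _ => by positivity) (Finset.mem_univ i)
  · exact eLp_tendsto (fun n => ((v (φ1 (φ2 n))).sub U).lapl_mem) r5

lemma min_seq {σ m : ℝ} (hem : EminE N σ m < ⊤) : ∃ u : ℕ → H2 N, (∀ n, (u n).massSq = m) ∧
    Tendsto (fun n => (((u n).energy σ : ℝ) : EReal)) atTop (nhds (EminE N σ m)) := by
  set S : Set EReal := {t | ∃ U : H2 N, U.massSq = m ∧ t = ((U.energy σ : ℝ) : EReal)} with hS
  have hinf : EminE N σ m = sInf S := by
    apply le_antisymm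
    · refine le_sInf ?_
      rintro t ⟨U, hU, rfl⟩
      exact iInf₂_le U hU
    · refine le_iInf₂ fun U hU => sInf_le ⟨U, hU, rfl⟩
  have hne : S.Nonempty := by
    by_contra h
    rw [Set.not_nonempty_iff_eq_empty] at h
    rw [hinf, h, sInf_empty] at hem
    exact lt_irrefl _ hem
  obtain ⟨t, -, ht, htS⟩ := exists_seq_tendsto_sInf hne (OrderBot.bddBelow S)
  choose u hu using htS
  refine ⟨u, fun n => (hu n).1, ?_⟩
  rw [hinf]
  exact ht.congr fun n => (hu n).2

end Part12

/-- In the mass-subcritical case (or mass-critical below `k*`), if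
`E_min(m) < -m` then every minimizing sequence is precompact in `H²` modulo translations,
and a minimizer exists. -/
theorem stmt9 (N : ℕ) (σ : ℝ) (hN : 1 ≤ N) (hσ : 0 < σ) (m : ℝ) (hm : 0 < m)
    (hcase : ((N : ℝ) * σ < 4 ∧ EminE N σ m < ((-m : ℝ) : EReal)) ∨
      ((N : ℝ) * σ = 4 ∧ m < kstar N σ ∧ EminE N σ m < ((-m : ℝ) : EReal))) :
    (∀ u : ℕ → H2 N,
      Tendsto (fun n => (u n).massSq) atTop (nhds m) →
      Tendsto (fun n => (((u n).energy σ : ℝ) : EReal)) atTop (nhds (EminE N σ m)) →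
      ∃ (ψ : ℕ → ℕ) (xs : ℕ → Esp N) (U : H2 N), StrictMono ψ ∧
        H2TendstoTrans (fun k => u (ψ k)) xs U ∧
        U.massSq = m ∧ ((U.energy σ : ℝ) : EReal) = EminE N σ m) ∧
    ∃ U : H2 N, U.massSq = m ∧ ((U.energy σ : ℝ) : EReal) = EminE N σ m := by
  have hem : EminE N σ m < ((-m : ℝ) : EReal) := by
    rcases hcase with h | h
    · exact h.2
    · exact h.2.2
  have hc : (N : ℝ) * σ < 4 ∨ ((N : ℝ) * σ = 4 ∧ m < kstar N σ) := by
    rcases hcase with h | h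
    · exact Or.inl h.1
    · exact Or.inr ⟨h.1, h.2.1⟩
  have h1 := main_compact hN hσ hm hc hem
  refine ⟨h1, ?_⟩
  obtain ⟨u, hu, hu2⟩ := min_seq (hem.trans (EReal.coe_lt_top _))
  obtain ⟨-, -, U, -, -, h2, h3⟩ := h1 u (by simp only [hu]; exact tendsto_const_nhds) hu2
  exact ⟨U, h2, h3⟩

end
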